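/- arXiv:2502.05412 — 3 statements merged into one kernel-verified Lean document; each statement's English description precedes it below -/
import Mathlib

section
/- Let 𝒜 = (A_1,…,A_m) be an m-tuple of n×n complex matrices. Then max over all complex linear subspaces U ≤ ℂ^n of (dim U − dim 𝒜U) equals one-half of the infimum over all g,h ∈ GL(n,ℂ) of ‖T_{gᴴ𝒜h}(I) − I‖₁ + ‖T*_{gᴴ𝒜h}(I) − I‖₁. (By the Fortin–Reutenauer formula, the left-hand side equals n − nc-rank(A_1x_1+⋯+A_mx_m), so this states that the noncommutative corank equals half the minimum trace-norm scaling residual.) -/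
noncomputable section
open scoped Classical

open Matrix
open scoped ComplexOrder

/-- The completely positive operator `T_𝒜(X) = ∑ k, A k * X * (A k)ᴴ`. -/
def Tcp {m n : ℕ} (A : Fin m → Matrix (Fin n) (Fin n) ℂ)
    (X : Matrix (Fin n) (Fin n) ℂ) : Matrix (Fin n) (Fin n) ℂ :=
  ∑ k, A k * X * (A k)ᴴ

/-- The dual operator `T*_𝒜(X) = ∑ k, (A k)ᴴ * X * A k`. -/
def TcpStar {m n : ℕ} (A : Fin m → Matrix (Fin n) (Fin n) ℂ)
    (X : Matrix (Fin n) (Fin n) ℂ) : Matrix (Fin n) (Fin n) ℂ :=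
  ∑ k, (A k)ᴴ * X * A k

/-- The positive semidefinite square root of a positive semidefinite matrix
(the definition of the older Mathlib, since removed). -/
def Matrix.PosSemidef.sqrt {n 𝕜 : Type*} [Fintype n] [RCLike 𝕜] [DecidableEq n]
    {A : Matrix n n 𝕜} (hA : A.PosSemidef) : Matrix n n 𝕜 :=
  hA.1.eigenvectorUnitary.1 * diagonal ((↑) ∘ Real.sqrt ∘ hA.1.eigenvalues) *
    (star hA.1.eigenvectorUnitary : Matrix n n 𝕜)

/-- The positive semidefinite square root (junk value `0` off PSD matrices). -/
def matSqrt {n : ℕ} (X : Matrix (Fin n) (Fin n) ℂ) : Matrix (Fin n) (Fin n) ℂ :=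
  if h : X.PosSemidef then h.sqrt else 0

/-- Trace norm: sum of singular values, i.e. `tr √(XᴴX)`. -/
def traceNorm {n : ℕ} (X : Matrix (Fin n) (Fin n) ℂ) : ℝ :=
  (matSqrt (Xᴴ * X)).trace.re

/-- `𝒜U = ∑ k, A_k U`. -/
def ASpan {m : ℕ} {ι : Type*} [Fintype ι] [DecidableEq ι]
    (A : Fin m → Matrix ι ι ℂ) (U : Submodule ℂ (ι → ℂ)) : Submodule ℂ (ι → ℂ) :=
  ⨆ k, U.map (A k).mulVecLin

lemma spec_exists {n : ℕ} {H : Matrix (Fin n) (Fin n) ℂ} (hH : H.IsHermitian) :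
    ∃ (u : Matrix (Fin n) (Fin n) ℂ), uᴴ * u = 1 ∧ u * uᴴ = 1 ∧
      H = u * diagonal (fun i => (hH.eigenvalues i : ℂ)) * uᴴ := by
  refine ⟨hH.eigenvectorUnitary, ?_, ?_, ?_⟩
  · exact Unitary.coe_star_mul_self hH.eigenvectorUnitary
  · exact Unitary.coe_mul_star_self hH.eigenvectorUnitary
  · have := hH.spectral_theorem
    rw [Unitary.conjStarAlgAut_apply] at this
    exact this

lemma traceNorm_of_spec {n : ℕ} {H u : Matrix (Fin n) (Fin n) ℂ} {d : Fin n → ℝ}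
    (hu : uᴴ * u = 1) (hH : H = u * diagonal (fun i => (d i : ℂ)) * uᴴ) :
    traceNorm H = ∑ i, |d i| := by
  have hP : (Hᴴ * H).PosSemidef := posSemidef_conjTranspose_mul_self H
  have h1 : traceNorm H = ∑ i, Real.sqrt (hP.1.eigenvalues i) := by
    unfold traceNorm matSqrt
    rw [dif_pos hP]
    unfold Matrix.PosSemidef.sqrt
    rw [trace_mul_cycle]
    have : (star hP.1.eigenvectorUnitary : Matrix (Fin n) (Fin n) ℂ) *
      hP.1.eigenvectorUnitary.1 = 1 := Unitary.coe_star_mul_self hP.1.eigenvectorUnitary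
    rw [this, one_mul, trace_diagonal]
    simp
  have h2 : Hᴴ * H = u * diagonal (fun i => ((d i ^ 2 : ℝ) : ℂ)) * uᴴ := by
    have h3 : Hᴴ = u * diagonal (fun i => (d i : ℂ)) * uᴴ := by
      rw [hH]
      simp only [conjTranspose_mul, conjTranspose_conjTranspose, diagonal_conjTranspose,
        Matrix.mul_assoc]
      congr 3
      ext i
      simp
    rw [h3, hH]
    calc _ = u * diagonal (fun i => (d i : ℂ)) * (uᴴ * u) * diagonal (fun i => (d i : ℂ)) * uᴴ := by
          simp only [Matrix.mul_assoc]
      _ = _ := by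
        rw [hu, Matrix.mul_one, Matrix.mul_assoc u, diagonal_mul_diagonal]
        congr 3
        ext i
        push_cast; ring
  have h4 : (Hᴴ * H).charpoly = ∏ i, (Polynomial.X - Polynomial.C ((d i ^ 2 : ℝ) : ℂ)) := by
    rw [h2, charpoly_mul_comm, ← Matrix.mul_assoc, hu, Matrix.one_mul, charpoly_diagonal]
  have h5 := hP.1.roots_charpoly_eq_eigenvalues
  rw [h4, Polynomial.roots_prod _ _ 
    (Finset.prod_ne_zero_iff.2 fun i _ => Polynomial.X_sub_C_ne_zero _)] at h5
  have h6 := congrArg (fun S : Multiset ℂ => (S.map (fun z => Real.sqrt z.re)).sum) h5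
  simp only [Polynomial.roots_X_sub_C, Multiset.bind_singleton, Multiset.map_map] at h6
  rw [h1]
  have h7 : ∑ i, Real.sqrt (d i ^ 2) = ∑ i, Real.sqrt (hP.1.eigenvalues i) := by
    simpa [Finset.sum, Function.comp_def, ← Complex.ofReal_pow, -Complex.ofReal_pow] using h6
  rw [← h7]
  simp [Real.sqrt_sq_eq_abs]

lemma traceNorm_upper {n : ℕ} {H K Z : Matrix (Fin n) (Fin n) ℂ} {ε : ℝ}
    (hH : H.IsHermitian) (hHK : H = K - Z) (hZ : Z.PosSemidef)
    (hK1 : ((ε : ℂ) • (1 : Matrix (Fin n) (Fin n) ℂ) - K).PosSemidef)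
    (hK2 : ((ε : ℂ) • (1 : Matrix (Fin n) (Fin n) ℂ) + K).PosSemidef) :
    traceNorm H ≤ n * ε + Z.trace.re := by
  obtain ⟨u, hu, hu', hs⟩ := spec_exists hH
  rw [traceNorm_of_spec hu hs]
  have hD : uᴴ * H * u = diagonal (fun i => (hH.eigenvalues i : ℂ)) := by
    calc uᴴ * H * u = (uᴴ * u) * diagonal (fun i => (hH.eigenvalues i : ℂ)) * (uᴴ * u) := by
          conv_lhs => rw [hs]
          simp only [Matrix.mul_assoc]
      _ = _ := by rw [hu, Matrix.one_mul, Matrix.mul_one]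
  have hZt : Z.trace = (uᴴ * Z * u).trace := by
    rw [trace_mul_cycle, hu', Matrix.one_mul]
  have key : ∀ i, |hH.eigenvalues i| ≤ ε + ((uᴴ * Z * u) i i).re := by
    intro i
    have a1 := (hK1.conjTranspose_mul_mul_same u).diag_nonneg (i := i)
    have a2 := (hK2.conjTranspose_mul_mul_same u).diag_nonneg (i := i)
    have a3 := (hZ.conjTranspose_mul_mul_same u).diag_nonneg (i := i)
    have a4 : hH.eigenvalues i = ((uᴴ * K * u) i i).re - ((uᴴ * Z * u) i i).re := by
      have := congrArg (fun M : Matrix (Fin n) (Fin n) ℂ => (M i i).re) hD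
      simp only [diagonal_apply_eq, Complex.ofReal_re] at this
      rw [← this, hHK, Matrix.mul_sub, Matrix.sub_mul, Matrix.sub_apply, Complex.sub_re]
    rw [Matrix.mul_sub, Matrix.sub_mul, mul_smul_comm, Matrix.mul_one, smul_mul_assoc, hu] at a1
    rw [Matrix.mul_add, Matrix.add_mul, mul_smul_comm, Matrix.mul_one, smul_mul_assoc, hu] at a2
    have b1 := (Complex.le_def.1 a1).1
    have b2 := (Complex.le_def.1 a2).1
    have b3 := (Complex.le_def.1 a3).1
    simp at b1 b2 b3
    rw [abs_le]
    constructor <;> linarith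
  calc ∑ i, |hH.eigenvalues i| ≤ ∑ i, (ε + ((uᴴ * Z * u) i i).re) :=
        Finset.sum_le_sum fun i _ => key i
    _ = _ := by
      rw [hZt, Finset.sum_add_distrib, trace, Complex.re_sum]
      simp

lemma traceNorm_lower {n : ℕ} {H W : Matrix (Fin n) (Fin n) ℂ}
    (hH : H.IsHermitian) (hW1 : (1 - W).PosSemidef) (hW2 : (1 + W).PosSemidef) :
    (W * H).trace.re ≤ traceNorm H := by
  obtain ⟨u, hu, hu', hs⟩ := spec_exists hH
  rw [traceNorm_of_spec hu hs]
  have e : (W * H).trace = ((uᴴ * W * u) * diagonal (fun i => (hH.eigenvalues i : ℂ))).trace := by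
    conv_lhs => rw [hs]
    rw [← Matrix.mul_assoc, ← Matrix.mul_assoc, Matrix.mul_assoc (W * u), trace_mul_comm, Matrix.mul_assoc,
      Matrix.mul_assoc, trace_mul_comm]
    simp only [Matrix.mul_assoc]
  rw [e, trace, Complex.re_sum]
  refine Finset.sum_le_sum fun i _ => ?_
  simp only [diag_apply, mul_diagonal]
  have a1 := (hW1.conjTranspose_mul_mul_same u).diag_nonneg (i := i)
  have a2 := (hW2.conjTranspose_mul_mul_same u).diag_nonneg (i := i)
  rw [Matrix.mul_sub, Matrix.sub_mul, Matrix.mul_one, hu] at a1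
  rw [Matrix.mul_add, Matrix.add_mul, Matrix.mul_one, hu] at a2
  have b1 := (Complex.le_def.1 a1).1
  have b2 := (Complex.le_def.1 a2).1
  simp at b1 b2
  simp only [Complex.mul_re, Complex.ofReal_re, Complex.ofReal_im, mul_zero, sub_zero]
  refine (le_abs_self _).trans ?_
  rw [abs_mul]
  have : |((uᴴ * W * u) i i).re| ≤ 1 := by rw [abs_le]; constructor <;> linarith
  nlinarith [abs_nonneg (hH.eigenvalues i)]

lemma exists_proj {n : ℕ} (V : Submodule ℂ (Fin n → ℂ)) :
    ∃ P : Matrix (Fin n) (Fin n) ℂ, Pᴴ = P ∧ P * P = P ∧ (∀ v ∈ V, P *ᵥ v = v) ∧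
      (∀ v, P *ᵥ v ∈ V) ∧ P.trace = (Module.finrank ℂ V : ℂ) := by
  let e := WithLp.linearEquiv 2 ℂ (Fin n → ℂ)
  let V' : Submodule ℂ (EuclideanSpace ℂ (Fin n)) := V.comap e.toLinearMap
  let f : EuclideanSpace ℂ (Fin n) →ₗ[ℂ] EuclideanSpace ℂ (Fin n) := V'.starProjection.toLinearMap
  let P : Matrix (Fin n) (Fin n) ℂ := Matrix.toEuclideanLin.symm f
  have hP : ∀ v, P *ᵥ v = e (f (e.symm v)) := by
    intro v
    have : Matrix.toEuclideanLin P = f := by simp [P]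
    rw [← this]
    rfl
  have hidem : ∀ v, f (f v) = f v := by
    intro v
    exact Submodule.starProjection_eq_self_iff.2 (Submodule.starProjection_apply_mem _ _)
  have hmem : ∀ v, P *ᵥ v ∈ V := by
    intro v
    rw [hP]
    exact Submodule.starProjection_apply_mem V' (e.symm v)
  have hfix : ∀ v ∈ V, P *ᵥ v = v := by
    intro v hv
    rw [hP]
    have : f (e.symm v) = e.symm v := Submodule.starProjection_eq_self_iff.2 (by simpa [V'] using hv)
    rw [this]; simp
  refine ⟨P, ?_, ?_, hfix, hmem, ?_⟩
  · have : (Matrix.toEuclideanLin P).IsSymmetric := by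
      have h2 : Matrix.toEuclideanLin P = f := by simp [P]
      rw [h2]
      exact Submodule.starProjection_isSymmetric (K := V')
    exact (Matrix.isSymmetric_toEuclideanLin_iff).1 this
  · apply Matrix.ext_of_mulVec_single
    intro j
    rw [← Matrix.mulVec_mulVec]
    exact hfix _ (hmem _)
  · have h := LinearMap.IsProj.trace (p := V) (f := Matrix.toLin' P) ⟨hmem, hfix⟩
    rw [← h, Matrix.trace_toLin'_eq]

lemma proj_posSemidef {n : ℕ} {P : Matrix (Fin n) (Fin n) ℂ} (h1 : Pᴴ = P) (h2 : P * P = P) :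
    P.PosSemidef := by
  have := posSemidef_conjTranspose_mul_self P
  rwa [h1, h2] at this

lemma dual_bound {m n : ℕ} (B : Fin m → Matrix (Fin n) (Fin n) ℂ) (U : Submodule ℂ (Fin n → ℂ)) :
    2 * ((Module.finrank ℂ U : ℝ) - (Module.finrank ℂ (ASpan B U) : ℝ)) ≤
      traceNorm (Tcp B 1 - 1) + traceNorm (TcpStar B 1 - 1) := by
  obtain ⟨P, hP1, hP2, hP3, hP4, hP5⟩ := exists_proj U
  obtain ⟨Q, hQ1, hQ2, hQ3, hQ4, hQ5⟩ := exists_proj (ASpan B U)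
  have hT : (Tcp B 1).PosSemidef := by
    unfold Tcp
    exact posSemidef_sum _ fun k _ => PosSemidef.one.mul_mul_conjTranspose_same _
  have hT' : (TcpStar B 1).PosSemidef := by
    unfold TcpStar
    exact posSemidef_sum _ fun k _ => PosSemidef.one.conjTranspose_mul_mul_same _
  have comp : ∀ R : Matrix (Fin n) (Fin n) ℂ, Rᴴ = R → R * R = R → (1 - R).PosSemidef := by
    intro R h1 h2
    apply proj_posSemidef
    · simp [h1]
    · simp [Matrix.mul_sub, Matrix.sub_mul, h2]
  have l1 := traceNorm_lower (W := 2 • Q - 1) (hT.1.sub isHermitian_one)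
    (by
      have := (comp Q hQ1 hQ2).smul (a := (2 : ℝ)) (by norm_num)
      convert this using 1
      rw [ofNat_smul_eq_nsmul, two_smul, two_smul]; abel)
    (by
      have := (proj_posSemidef hQ1 hQ2).smul (a := (2 : ℝ)) (by norm_num)
      convert this using 1
      rw [ofNat_smul_eq_nsmul, two_smul, two_smul]; abel)
  have l2 := traceNorm_lower (W := 1 - 2 • P) (hT'.1.sub isHermitian_one)
    (by
      have := (proj_posSemidef hP1 hP2).smul (a := (2 : ℝ)) (by norm_num)
      convert this using 1
      rw [ofNat_smul_eq_nsmul, two_smul, two_smul]; abel)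
    (by
      have := (comp P hP1 hP2).smul (a := (2 : ℝ)) (by norm_num)
      convert this using 1
      rw [ofNat_smul_eq_nsmul, two_smul, two_smul]; abel)
  have hQBP : ∀ k, Q * B k * P = B k * P := by
    intro k
    have hx : ∀ v, Q *ᵥ (B k *ᵥ (P *ᵥ v)) = B k *ᵥ (P *ᵥ v) := by
      intro v
      apply hQ3
      unfold ASpan
      exact Submodule.mem_iSup_of_mem k (Submodule.mem_map_of_mem (f := (B k).mulVecLin) (hP4 v))
    apply Matrix.ext_of_mulVec_single
    intro j
    have := hx (Pi.single j 1)
    rwa [Matrix.mulVec_mulVec, Matrix.mulVec_mulVec, Matrix.mulVec_mulVec] at this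
  have htr : (Tcp B 1).trace = (TcpStar B 1).trace := by
    unfold Tcp TcpStar
    rw [trace_sum, trace_sum]
    refine Finset.sum_congr rfl fun k _ => ?_
    rw [Matrix.mul_one, Matrix.mul_one, trace_mul_comm]
  have hmain : (P * TcpStar B 1).trace.re ≤ (Q * Tcp B 1).trace.re := by
    unfold Tcp TcpStar
    rw [Matrix.mul_sum, Matrix.mul_sum, trace_sum, trace_sum, Complex.re_sum, Complex.re_sum]
    refine Finset.sum_le_sum fun k _ => ?_
    have e1 : (P * ((B k)ᴴ * 1 * B k)).trace = (P * ((B k)ᴴ * Q * B k) * P).trace := by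
      have : P * ((B k)ᴴ * Q * B k) * P = P * ((B k)ᴴ * B k) * P := by
        calc _ = P * (B k)ᴴ * (Q * B k * P) := by simp only [Matrix.mul_assoc]
          _ = _ := by rw [hQBP]; simp only [Matrix.mul_assoc]
      rw [this, trace_mul_cycle P _ P, hP2, Matrix.mul_one]
    have e2 : (Q * (B k * 1 * (B k)ᴴ)).trace = ((B k)ᴴ * Q * B k).trace := by
      rw [Matrix.mul_one, trace_mul_comm, Matrix.mul_assoc, trace_mul_comm]
    have hps : ((1 - P)ᴴ * ((B k)ᴴ * Q * B k) * (1 - P)).PosSemidef :=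
      ((proj_posSemidef hQ1 hQ2).conjTranspose_mul_mul_same (B k)).conjTranspose_mul_mul_same _
    have h0 := (Complex.le_def.1 hps.trace_nonneg).1
    set N := (B k)ᴴ * Q * B k
    have e3 : ((1 - P)ᴴ * N * (1 - P)).trace = N.trace - (P * N * P).trace := by
      have hx : (1 - P)ᴴ = 1 - P := by simp [hP1]
      have hy : (1 - P) * (1 - P) = 1 - P := by simp [Matrix.mul_sub, Matrix.sub_mul, hP2]
      rw [hx, trace_mul_cycle, hy, trace_mul_cycle P N P, hP2, Matrix.sub_mul, Matrix.one_mul, trace_sub]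
    rw [e3] at h0
    rw [e1, e2]
    simp at h0
    linarith
  have c1 : ((2 • Q - 1) * (Tcp B 1 - 1)).trace.re = 2 * (Q * Tcp B 1).trace.re
      - 2 * (Module.finrank ℂ (ASpan B U)) - (Tcp B 1).trace.re + n := by
    simp only [Matrix.mul_sub, Matrix.sub_mul, trace_sub, trace_smul, smul_mul_assoc, Matrix.mul_one, Matrix.one_mul, hQ5, trace_one]
    simp
    ring
  have c2 : ((1 - 2 • P) * (TcpStar B 1 - 1)).trace.re = - 2 * (P * TcpStar B 1).trace.re
      + 2 * (Module.finrank ℂ U) + (TcpStar B 1).trace.re - n := by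
    simp only [Matrix.mul_sub, Matrix.sub_mul, trace_sub, trace_smul, smul_mul_assoc, Matrix.mul_one, Matrix.one_mul, hP5, trace_one]
    simp
    ring
  rw [c1] at l1
  rw [c2] at l2
  rw [htr] at l1
  linarith

/-- Weights of the padded bipartite graph. -/
def padW {m n : ℕ} (A : Fin m → Matrix (Fin n) (Fin n) ℂ) (c : ℕ)
    (u v : Matrix (Fin n) (Fin n) ℂ) : (Fin n ⊕ Fin c) → (Fin n ⊕ Fin c) → ℝ
  | Sum.inl i, Sum.inl j => ∑ k, ‖(vᴴ * A k * u) j i‖ ^ 2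
  | Sum.inl _, Sum.inr _ => 1
  | Sum.inr _, Sum.inl _ => 1
  | Sum.inr _, Sum.inr _ => 0

lemma padW_nonneg {m n : ℕ} (A : Fin m → Matrix (Fin n) (Fin n) ℂ) (c : ℕ)
    (u v : Matrix (Fin n) (Fin n) ℂ) (p q) : 0 ≤ padW A c u v p q := by
  rcases p with i | i <;> rcases q with j | j <;> simp only [padW] <;> positivity

lemma card_le_nbrs {m n : ℕ} (A : Fin m → Matrix (Fin n) (Fin n) ℂ) (c : ℕ)
    (hc : ∀ U : Submodule ℂ (Fin n → ℂ),
      Module.finrank ℂ U ≤ Module.finrank ℂ (ASpan A U) + c)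
    (u v : Matrix (Fin n) (Fin n) ℂ) (hu : uᴴ * u = 1) (hv : v * vᴴ = 1)
    (S : Finset (Fin n)) :
    S.card ≤ (Finset.univ.filter fun j => ∃ i ∈ S, ∃ k, (vᴴ * A k * u) j i ≠ 0).card + c := by
  set N := Finset.univ.filter fun j => ∃ i ∈ S, ∃ k, (vᴴ * A k * u) j i ≠ 0 with hN
  have hli : LinearIndependent ℂ (fun i => u.col i) := by
    rw [Matrix.linearIndependent_cols_iff_isUnit]
    exact IsUnit.of_mul_eq_one_right _ hu
  let U := Submodule.span ℂ (Set.range fun i : S => u.col i)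
  have hU : Module.finrank ℂ U = S.card := by
    have := finrank_span_eq_card (hli.comp (fun i : S => (i : Fin n)) Subtype.val_injective)
    simpa [U, Function.comp_def] using this
  have hA : ASpan A U ≤ Submodule.span ℂ ((N.image fun j => v.col j : Finset (Fin n → ℂ)) : Set (Fin n → ℂ)) := by
    unfold ASpan
    refine iSup_le fun k => ?_
    rw [Submodule.map_le_iff_le_comap]
    refine Submodule.span_le.2 ?_
    rintro _ ⟨i, rfl⟩
    simp only [Submodule.comap_coe, Set.mem_preimage, SetLike.mem_coe, mulVecLin_apply]
    have e : A k *ᵥ u.col i = ∑ j, (vᴴ * A k * u) j i • v.col j := by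
      have e1 : A k * u = v * (vᴴ * A k * u) := by
        rw [Matrix.mul_assoc, ← Matrix.mul_assoc v, hv, Matrix.one_mul]
      ext a
      have := congrFun (congrFun e1 a) i
      rw [Matrix.mul_apply, Matrix.mul_apply] at this
      simp only [mulVec, dotProduct, col_apply, Finset.sum_apply, Pi.smul_apply, smul_eq_mul]
      rw [this]
      exact Finset.sum_congr rfl fun _ _ => mul_comm _ _
    rw [e]
    refine Submodule.sum_mem _ fun j _ => ?_
    by_cases h : (vᴴ * A k * u) j i = 0
    · rw [h, zero_smul]; exact Submodule.zero_mem _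
    · refine Submodule.smul_mem _ _ (Submodule.subset_span ?_)
      simp only [Finset.coe_image, Set.mem_image, Finset.mem_coe]
      exact ⟨j, by rw [hN]; simp only [Finset.mem_filter, Finset.mem_univ, true_and]; exact ⟨i, i.2, k, h⟩, rfl⟩
  have h1 := Submodule.finrank_mono hA
  have h2 := finrank_span_finset_le_card (R := ℂ) (N.image fun j => v.col j)
  have h3 : (N.image fun j => v.col j).card ≤ N.card := Finset.card_image_le
  have h4 := hc U
  unfold Set.finrank at h2
  omega

lemma hall_perm {m n : ℕ} (A : Fin m → Matrix (Fin n) (Fin n) ℂ) (c : ℕ) (hcn : c ≤ n)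
    (hc : ∀ U : Submodule ℂ (Fin n → ℂ),
      Module.finrank ℂ U ≤ Module.finrank ℂ (ASpan A U) + c)
    (u v : Matrix (Fin n) (Fin n) ℂ) (hu : uᴴ * u = 1) (hv : v * vᴴ = 1) :
    ∃ σ : Equiv.Perm (Fin n ⊕ Fin c), ∀ p, 0 < padW A c u v p (σ p) := by
  let nb : (Fin n ⊕ Fin c) → Finset (Fin n ⊕ Fin c) :=
    fun p => Finset.univ.filter fun q => 0 < padW A c u v p q
  have hnb : ∀ p q, 0 < padW A c u v p q → q ∈ nb p := fun p q h =>
    Finset.mem_filter.2 ⟨Finset.mem_univ _, h⟩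
  have hall : ∀ S : Finset (Fin n ⊕ Fin c), S.card ≤ (S.biUnion nb).card := by
    intro S
    by_cases hR : ∃ r, Sum.inr r ∈ S
    · obtain ⟨r, hr⟩ := hR
      have hl : ∀ j : Fin n, Sum.inl j ∈ S.biUnion nb := by
        intro j
        rw [Finset.mem_biUnion]
        exact ⟨_, hr, hnb _ _ (by simp only [padW]; exact one_pos)⟩
      by_cases hL : ∃ l, Sum.inl l ∈ S
      · obtain ⟨l, hl'⟩ := hL
        have : S.biUnion nb = Finset.univ := by
          ext q
          simp only [Finset.mem_univ, iff_true]
          rcases q with j | j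
          · exact hl j
          · rw [Finset.mem_biUnion]
            exact ⟨_, hl', hnb _ _ (by simp only [padW]; exact one_pos)⟩
        rw [this]
        exact Finset.card_le_univ _
      · push Not at hL
        have h1 : S ⊆ Finset.univ.image Sum.inr := by
          intro p hp
          rcases p with i | i
          · exact absurd hp (hL i)
          · simp
        have h2 : (Finset.univ.image Sum.inl : Finset (Fin n ⊕ Fin c)) ⊆ S.biUnion nb := by
          intro p hp
          rcases p with i | i
          · exact hl i
          · simp at hp
        have h3 := Finset.card_le_card h1
        have h4 := Finset.card_le_card h2
        rw [Finset.card_image_of_injective _ Sum.inr_injective, Finset.card_univ, Fintype.card_fin] at h3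
        rw [Finset.card_image_of_injective _ Sum.inl_injective, Finset.card_univ, Fintype.card_fin] at h4
        omega
    · push Not at hR
      rcases S.eq_empty_or_nonempty with rfl | ⟨p0, hp0⟩
      · simp
      let S' : Finset (Fin n) := Finset.univ.filter fun i => Sum.inl i ∈ S
      have hS : S = S'.image Sum.inl := by
        ext p
        rcases p with i | i
        · simp [S']
        · simp [hR i]
      have hcard : S.card = S'.card := by
        conv_lhs => rw [hS]
        exact Finset.card_image_of_injective _ Sum.inl_injective
      set N := Finset.univ.filter fun j => ∃ i ∈ S', ∃ k, (vᴴ * A k * u) j i ≠ 0 with hN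
      have hk : S'.card ≤ N.card + c := card_le_nbrs A c hc u v hu hv S'
      have hsub : N.image Sum.inl ∪ (Finset.univ : Finset (Fin c)).image Sum.inr ⊆ S.biUnion nb := by
        intro q hq
        rw [Finset.mem_biUnion]
        rcases q with j | j
        · have hj : j ∈ N := by simpa using hq
          rw [hN, Finset.mem_filter] at hj
          obtain ⟨-, i, hi, k, hne⟩ := hj
          refine ⟨Sum.inl i, by simpa [S'] using hi, ?_⟩
          refine hnb _ _ ?_
          simp only [padW]
          refine Finset.sum_pos' (fun _ _ => by positivity) ⟨k, Finset.mem_univ _, ?_⟩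
          have := norm_pos_iff.2 hne
          positivity
        · rcases p0 with i | i
          · exact ⟨_, hp0, hnb _ _ (by simp only [padW]; exact one_pos)⟩
          · exact absurd hp0 (hR i)
      have h5 := Finset.card_le_card hsub
      rw [Finset.card_union_of_disjoint (by
        rw [Finset.disjoint_left]
        rintro (a | a) <;> simp),
        Finset.card_image_of_injective _ Sum.inl_injective,
        Finset.card_image_of_injective _ Sum.inr_injective, Finset.card_univ, Fintype.card_fin] at h5
      omega
  obtain ⟨f, hf, hfn⟩ := (Finset.all_card_le_biUnion_card_iff_exists_injective nb).1 hall
  refine ⟨Equiv.ofBijective f (Finite.injective_iff_bijective.1 hf), fun p => ?_⟩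
  have := hfn p
  simpa [nb] using this

lemma padW_continuous {m n : ℕ} (A : Fin m → Matrix (Fin n) (Fin n) ℂ) (c : ℕ) (p q) :
    Continuous fun uv : Matrix (Fin n) (Fin n) ℂ × Matrix (Fin n) (Fin n) ℂ =>
      padW A c uv.1 uv.2 p q := by
  rcases p with i | i <;> rcases q with j | j <;> simp only [padW]
  · refine continuous_finsetSum _ fun k _ => ?_
    refine (Continuous.norm ?_).pow 2
    exact Continuous.matrix_elem ((continuous_snd.matrix_conjTranspose.matrix_mul continuous_const).matrix_mul continuous_fst) j i
  all_goals exact continuous_const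

lemma isCompact_unit (n : ℕ) :
    IsCompact {u : Matrix (Fin n) (Fin n) ℂ | uᴴ * u = 1} := by
  have hsub : {u : Matrix (Fin n) (Fin n) ℂ | uᴴ * u = 1} ⊆
      Set.pi Set.univ (fun _ => Set.pi Set.univ fun _ => Metric.closedBall (0 : ℂ) 1) := by
    intro u hu i _ j _
    rw [mem_closedBall_zero_iff]
    have h := congrFun (congrFun hu j) j
    rw [Matrix.mul_apply, Matrix.one_apply_eq] at h
    have h2 : ∑ k, ‖u k j‖ ^ 2 = 1 := by
      have := congrArg Complex.re h
      simpa [Complex.mul_re, Complex.sq_norm, Complex.normSq_apply] using this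
    have h3 : ‖u i j‖ ^ 2 ≤ 1 := by
      rw [← h2]
      exact Finset.single_le_sum (f := fun k => ‖u k j‖ ^ 2) (fun _ _ => by positivity) (Finset.mem_univ i)
    nlinarith [norm_nonneg (u i j)]
  refine IsCompact.of_isClosed_subset
    (isCompact_univ_pi fun _ => isCompact_univ_pi fun _ => isCompact_closedBall (0 : ℂ) 1) ?_ hsub
  exact isClosed_eq (continuous_id.matrix_conjTranspose.matrix_mul continuous_id) continuous_const

lemma exists_kappa {m n : ℕ} (A : Fin m → Matrix (Fin n) (Fin n) ℂ) (c : ℕ) (hcn : c ≤ n)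
    (hc : ∀ U : Submodule ℂ (Fin n → ℂ),
      Module.finrank ℂ U ≤ Module.finrank ℂ (ASpan A U) + c) :
    ∃ κ : ℝ, 0 < κ ∧ ∀ u v : Matrix (Fin n) (Fin n) ℂ, uᴴ * u = 1 → vᴴ * v = 1 →
      ∃ σ : Equiv.Perm (Fin n ⊕ Fin c), κ ≤ ∏ p, padW A c u v p (σ p) := by
  let Φ : Matrix (Fin n) (Fin n) ℂ × Matrix (Fin n) (Fin n) ℂ → ℝ := fun uv =>
    ∑ σ : Equiv.Perm (Fin n ⊕ Fin c), ∏ p, padW A c uv.1 uv.2 p (σ p)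
  have hΦ : Continuous Φ := continuous_finsetSum _ fun σ _ =>
    continuous_finsetProd _ fun p _ => padW_continuous A c p (σ p)
  obtain ⟨⟨u0, v0⟩, h0, hmin⟩ := ((isCompact_unit n).prod (isCompact_unit n)).exists_isMinOn
    ⟨(1, 1), by simp⟩ hΦ.continuousOn
  have hpos : 0 < Φ (u0, v0) := by
    obtain ⟨σ, hσ⟩ := hall_perm A c hcn hc u0 v0 h0.1 (mul_eq_one_comm.1 h0.2)
    exact Finset.sum_pos' (fun τ _ => Finset.prod_nonneg fun p _ => padW_nonneg _ _ _ _ _ _)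
      ⟨σ, Finset.mem_univ _, Finset.prod_pos fun p _ => hσ p⟩
  set M : ℝ := ((Fintype.card (Equiv.Perm (Fin n ⊕ Fin c)) : ℕ) : ℝ) with hM
  have hMpos : 0 < M := by rw [hM]; exact_mod_cast Fintype.card_pos
  refine ⟨Φ (u0, v0) / M, div_pos hpos hMpos, fun u v hu hv => ?_⟩
  by_contra hcon
  push Not at hcon
  have h1 : Φ (u0, v0) ≤ Φ (u, v) := hmin ⟨hu, hv⟩
  have h2 : Φ (u, v) < ∑ σ : Equiv.Perm (Fin n ⊕ Fin c), Φ (u0, v0) / M :=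
    Finset.sum_lt_sum_of_nonempty ⟨1, Finset.mem_univ _⟩ fun σ _ => hcon σ
  rw [Finset.sum_const, Finset.card_univ, nsmul_eq_mul, ← hM, mul_div_cancel₀ _ hMpos.ne'] at h2
  linarith

/-- The potential function. -/
def Fobj {m n : ℕ} (A : Fin m → Matrix (Fin n) (Fin n) ℂ) (c : ℕ)
    (X Y : Matrix (Fin n) (Fin n) ℂ) (s t : ℝ) : ℝ :=
  (Y * Tcp A X).trace.re + c * (t * Y.trace.re) + c * (s * X.trace.re)
    - Real.log ‖X.det‖ - Real.log ‖Y.det‖ - c * Real.log s - c * Real.log t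

lemma log_det_eq {n : ℕ} {M : Matrix (Fin n) (Fin n) ℂ} (hM : M.PosDef) :
    Real.log ‖M.det‖ = ∑ i, Real.log (hM.1.eigenvalues i) := by
  rw [hM.1.det_eq_prod_eigenvalues, norm_prod, Real.log_prod]
  · refine Finset.sum_congr rfl fun i _ => ?_
    rw [RCLike.norm_ofReal, Real.log_abs]
  · intro i _
    have := hM.eigenvalues_pos i
    exact norm_ne_zero_iff.2 (RCLike.ofReal_ne_zero.2 this.ne')

lemma trace_re_eq {n : ℕ} {M : Matrix (Fin n) (Fin n) ℂ} (hM : M.PosDef) :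
    M.trace.re = ∑ i, hM.1.eigenvalues i := by
  rw [hM.1.trace_eq_sum_eigenvalues, Complex.re_sum]
  rfl

lemma trace_T_eq {m n : ℕ} (A : Fin m → Matrix (Fin n) (Fin n) ℂ)
    (u v : Matrix (Fin n) (Fin n) ℂ) (x y : Fin n → ℝ) :
    ((v * diagonal (fun i => (y i : ℂ)) * vᴴ) *
      Tcp A (u * diagonal (fun i => (x i : ℂ)) * uᴴ)).trace.re =
    ∑ i, ∑ j, (∑ k, ‖(vᴴ * A k * u) j i‖ ^ 2) * (x i * y j) := by
  unfold Tcp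
  rw [Matrix.mul_sum, trace_sum, Complex.re_sum]
  have h : ∀ k, ((v * diagonal (fun i => (y i : ℂ)) * vᴴ) *
      (A k * (u * diagonal (fun i => (x i : ℂ)) * uᴴ) * (A k)ᴴ)).trace.re =
      ∑ i, ∑ j, ‖(vᴴ * A k * u) j i‖ ^ 2 * (x i * y j) := by
    intro k
    set N := vᴴ * A k * u with hN
    have e : ((v * diagonal (fun i => (y i : ℂ)) * vᴴ) *
      (A k * (u * diagonal (fun i => (x i : ℂ)) * uᴴ) * (A k)ᴴ)).trace =
      (diagonal (fun i => (y i : ℂ)) * (N * diagonal (fun i => (x i : ℂ))) * Nᴴ).trace := by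
      have hN2 : Nᴴ = uᴴ * (A k)ᴴ * v := by
        rw [hN]; simp [Matrix.mul_assoc]
      rw [hN2, hN]
      rw [Matrix.mul_assoc v, Matrix.mul_assoc v, trace_mul_comm]
      simp only [Matrix.mul_assoc]
    rw [e, trace, Complex.re_sum, Finset.sum_comm]
    refine Finset.sum_congr rfl fun j _ => ?_
    rw [diag_apply, Matrix.mul_apply, Complex.re_sum]
    refine Finset.sum_congr rfl fun i _ => ?_
    rw [diagonal_mul, mul_diagonal, conjTranspose_apply, Complex.sq_norm, Complex.normSq_apply]
    simp only [Complex.mul_re, Complex.mul_im, Complex.ofReal_re, Complex.ofReal_im, RCLike.star_def,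
      Complex.conj_re, Complex.conj_im]
    ring
  simp only [h]
  rw [Finset.sum_comm]
  refine Finset.sum_congr rfl fun i _ => ?_
  rw [Finset.sum_comm]
  refine Finset.sum_congr rfl fun j _ => ?_
  rw [Finset.sum_mul]

lemma Fobj_lower {m n : ℕ} (A : Fin m → Matrix (Fin n) (Fin n) ℂ) (c : ℕ) (hcn : c ≤ n)
    (hc : ∀ U : Submodule ℂ (Fin n → ℂ),
      Module.finrank ℂ U ≤ Module.finrank ℂ (ASpan A U) + c) :
    ∃ C : ℝ, ∀ (X Y : Matrix (Fin n) (Fin n) ℂ) (s t : ℝ), X.PosDef → Y.PosDef → 0 < s → 0 < t →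
      C ≤ Fobj A c X Y s t := by
  obtain ⟨κ, hκ, hk⟩ := exists_kappa A c hcn hc
  refine ⟨Real.log κ, fun X Y s t hX hY hs ht => ?_⟩
  obtain ⟨u, hu, hu', hXs⟩ := spec_exists hX.1
  obtain ⟨v, hv, hv', hYs⟩ := spec_exists hY.1
  obtain ⟨σ, hσ⟩ := hk u v hu hv
  set x := hX.1.eigenvalues with hx
  set y := hY.1.eigenvalues with hy
  have hxp : ∀ i, 0 < x i := hX.eigenvalues_pos
  have hyp : ∀ i, 0 < y i := hY.eigenvalues_pos
  let z : Fin n ⊕ Fin c → ℝ := Sum.elim x (fun _ => t)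
  let w : Fin n ⊕ Fin c → ℝ := Sum.elim y (fun _ => s)
  have hz : ∀ p, 0 < z p := by rintro (i | i); exacts [hxp i, ht]
  have hw : ∀ p, 0 < w p := by rintro (i | i); exacts [hyp i, hs]
  have htr : (Y * Tcp A X).trace.re = ∑ i, ∑ j, (∑ k, ‖(vᴴ * A k * u) j i‖ ^ 2) * (x i * y j) := by
    rw [← trace_T_eq]
    conv_lhs => rw [hXs, hYs]
  have hF : Fobj A c X Y s t = ∑ p, ∑ q, padW A c u v p q * (z p * w q) - ∑ p, Real.log (z p)
      - ∑ q, Real.log (w q) := by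
    unfold Fobj
    rw [htr, log_det_eq hX, log_det_eq hY, trace_re_eq hX, trace_re_eq hY]
    simp only [Fintype.sum_sum_type, z, w, Sum.elim_inl, Sum.elim_inr, padW, one_mul, zero_mul,
      Finset.sum_const, Finset.card_univ, Fintype.card_fin, nsmul_eq_mul, Finset.sum_add_distrib,
      mul_zero, add_zero, ← Finset.mul_sum, ← Finset.sum_mul]
    rw [← hx, ← hy]
    ring
  have hapos : ∀ p, 0 < padW A c u v p (σ p) := by
    intro p
    refine lt_of_le_of_ne (padW_nonneg _ _ _ _ _ _) fun h => ?_
    have : ∏ p, padW A c u v p (σ p) = 0 := Finset.prod_eq_zero (Finset.mem_univ p) h.symm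
    linarith
  rw [hF, ← Equiv.sum_comp σ (fun q => Real.log (w q))]
  have h1 : ∑ p, padW A c u v p (σ p) * (z p * w (σ p)) ≤ ∑ p, ∑ q, padW A c u v p q * (z p * w q) := by
    refine Finset.sum_le_sum fun p _ => ?_
    refine Finset.single_le_sum (f := fun q => padW A c u v p q * (z p * w q)) (fun q _ => ?_) (Finset.mem_univ _)
    exact mul_nonneg (padW_nonneg _ _ _ _ _ _) (mul_pos (hz p) (hw q)).le
  have h2 : ∑ p, Real.log (padW A c u v p (σ p)) ≤
      ∑ p, (padW A c u v p (σ p) * (z p * w (σ p)) - Real.log (z p) - Real.log (w (σ p))) := by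
    refine Finset.sum_le_sum fun p _ => ?_
    have a := hapos p
    have b := hz p
    have d := hw (σ p)
    have := Real.log_le_sub_one_of_pos (mul_pos a (mul_pos b d))
    rw [Real.log_mul a.ne' (mul_pos b d).ne', Real.log_mul b.ne' d.ne'] at this
    linarith
  rw [← Real.log_prod (fun p _ => (hapos p).ne'), Finset.sum_sub_distrib, Finset.sum_sub_distrib] at h2
  have h3 := Real.log_le_log hκ hσ
  linarith

lemma posDef_factor {n : ℕ} {P : Matrix (Fin n) (Fin n) ℂ} (hP : P.PosDef) :
    ∃ g : GL (Fin n) ℂ, P = (g : Matrix (Fin n) (Fin n) ℂ) * (g : Matrix (Fin n) (Fin n) ℂ)ᴴ := by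
  obtain ⟨u, hu, hu', hs⟩ := spec_exists hP.1
  set d := hP.1.eigenvalues
  let g0 := u * diagonal (fun i => ((Real.sqrt (d i) : ℝ) : ℂ))
  have h0 : P = g0 * g0ᴴ := by
    rw [conjTranspose_mul, diagonal_conjTranspose, ← Matrix.mul_assoc, Matrix.mul_assoc u, diagonal_mul_diagonal]
    conv_lhs => rw [hs]
    congr 3
    ext i
    simp only [Pi.star_apply, RCLike.star_def, Complex.conj_ofReal]
    rw [← Complex.ofReal_mul, Real.mul_self_sqrt (hP.eigenvalues_pos i).le]
  have h1 : IsUnit g0 := by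
    have := hP.isUnit
    rw [h0] at this
    exact isUnit_of_mul_isUnit_left this
  exact ⟨h1.unit, h0⟩

lemma gap_eq {n : ℕ} {M : Matrix (Fin n) (Fin n) ℂ} (hM : M.PosDef) :
    M.trace.re - Real.log ‖M.det‖ - n =
      ∑ i, (hM.1.eigenvalues i - 1 - Real.log (hM.1.eigenvalues i)) := by
  rw [log_det_eq hM, trace_re_eq hM]
  simp only [Finset.sum_sub_distrib, Finset.sum_const, Finset.card_univ, Fintype.card_fin, nsmul_eq_mul]
  ring

lemma gap_conj {n : ℕ} {P S g : Matrix (Fin n) (Fin n) ℂ} (hP : P.PosDef) (hS : S.PosDef)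
    (h : P = g * gᴴ) :
    (gᴴ * S * g).PosDef ∧ (gᴴ * S * g).trace = (P * S).trace ∧
      Real.log ‖(gᴴ * S * g).det‖ = Real.log ‖P.det‖ + Real.log ‖S.det‖ := by
  have hg : IsUnit g := by
    have := hP.isUnit
    rw [h] at this
    exact isUnit_of_mul_isUnit_left this
  refine ⟨?_, ?_, ?_⟩
  · exact hS.conjTranspose_mul_mul_same (Matrix.mulVec_injective_of_isUnit hg)
  · rw [h, trace_mul_comm, ← Matrix.mul_assoc]
  · have h1 : S.det ≠ 0 := hS.det_pos.ne'
    have h2 : P.det ≠ 0 := hP.det_pos.ne'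
    rw [← Real.log_mul (norm_ne_zero_iff.2 h2) (norm_ne_zero_iff.2 h1), ← norm_mul]
    congr 2
    rw [h, det_mul, det_mul, det_mul]
    ring

lemma gap_nonneg {n : ℕ} {P S : Matrix (Fin n) (Fin n) ℂ} (hP : P.PosDef) (hS : S.PosDef) :
    (n : ℝ) + Real.log ‖P.det‖ + Real.log ‖S.det‖ ≤ (P * S).trace.re := by
  obtain ⟨g, hg⟩ := posDef_factor hP
  obtain ⟨h1, h2, h3⟩ := gap_conj hP hS hg
  have h4 := gap_eq h1
  have h5 : 0 ≤ ∑ i, (h1.1.eigenvalues i - 1 - Real.log (h1.1.eigenvalues i)) :=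
    Finset.sum_nonneg fun i _ => by
      have := Real.log_le_sub_one_of_pos (h1.eigenvalues_pos i)
      linarith
  rw [h2, h3] at h4
  linarith

lemma scalar_gap {η : ℝ} (hη : 0 < η) : ∃ δ : ℝ, 0 < δ ∧ ∀ x : ℝ, 0 < x →
    x - 1 - Real.log x ≤ δ → |x - 1| ≤ η := by
  set r := min 1 (η / 3) with hr
  have hr0 : 0 < r := by rw [hr]; positivity
  have hr1 : r ≤ 1 := min_le_left _ _
  have hr2 : r ≤ η / 3 := min_le_right _ _
  refine ⟨r ^ 2, by positivity, fun x hx h => ?_⟩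
  set q := Real.sqrt x with hq
  have hq0 : 0 < q := Real.sqrt_pos.2 hx
  have hxq : x = q ^ 2 := (Real.sq_sqrt hx.le).symm
  have h1 : Real.log x = 2 * Real.log q := by rw [hxq, Real.log_pow]; norm_num
  have h2 := Real.log_le_sub_one_of_pos hq0
  have h3 : (q - 1) ^ 2 ≤ r ^ 2 := by rw [h1, hxq] at h; nlinarith
  have h4 : |q - 1| ≤ r := abs_le_of_sq_le_sq h3 hr0.le
  rw [abs_le] at h4 ⊢
  rw [hxq]
  constructor <;> nlinarith

lemma Tcp_posSemidef {m n : ℕ} (B : Fin m → Matrix (Fin n) (Fin n) ℂ)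
    {X : Matrix (Fin n) (Fin n) ℂ} (hX : X.PosSemidef) : (Tcp B X).PosSemidef := by
  unfold Tcp
  exact posSemidef_sum _ fun k _ => hX.mul_mul_conjTranspose_same _

lemma TcpStar_eq {m n : ℕ} (A : Fin m → Matrix (Fin n) (Fin n) ℂ)
    (X : Matrix (Fin n) (Fin n) ℂ) : TcpStar A X = Tcp (fun k => (A k)ᴴ) X := by
  simp [Tcp, TcpStar]

lemma Tcp_posDef {m n : ℕ} (B : Fin m → Matrix (Fin n) (Fin n) ℂ)
    {X : Matrix (Fin n) (Fin n) ℂ} (hX : X.PosDef)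
    (hB : ∀ v : Fin n → ℂ, (∀ k, (B k)ᴴ *ᵥ v = 0) → v = 0) : (Tcp B X).PosDef := by
  have hps := Tcp_posSemidef B hX.posSemidef
  refine PosDef.of_dotProduct_mulVec_pos hps.1 fun v hv => ?_
  refine lt_of_le_of_ne (hps.dotProduct_mulVec_nonneg v) fun h => hv (hB v fun k => ?_)
  have e : star v ⬝ᵥ (Tcp B X *ᵥ v) = ∑ k, star ((B k)ᴴ *ᵥ v) ⬝ᵥ (X *ᵥ ((B k)ᴴ *ᵥ v)) := by
    unfold Tcp
    rw [Matrix.sum_mulVec, dotProduct_sum]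
    refine Finset.sum_congr rfl fun k _ => ?_
    rw [star_mulVec, conjTranspose_conjTranspose, ← dotProduct_mulVec, Matrix.mulVec_mulVec, Matrix.mulVec_mulVec,
      Matrix.mul_assoc]
  rw [e] at h
  have h2 := (Finset.sum_eq_zero_iff_of_nonneg
    (fun k _ => hX.posSemidef.dotProduct_mulVec_nonneg ((B k)ᴴ *ᵥ v))).1 h.symm k (Finset.mem_univ _)
  by_contra hne
  exact (hX.dotProduct_mulVec_pos hne).ne' h2

lemma shift_posDef {n : ℕ} {Z : Matrix (Fin n) (Fin n) ℂ} (hZ : Z.PosSemidef) {a : ℝ} (ha : 0 ≤ a)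
    (h : a = 0 → Z.PosDef) : (Z + (a : ℂ) • (1 : Matrix (Fin n) (Fin n) ℂ)).PosDef := by
  rcases ha.eq_or_lt with h0 | h0
  · rw [← h0]
    simpa using h h0.symm
  · refine PosDef.posSemidef_add hZ ?_
    exact PosDef.one.smul (by exact_mod_cast h0)

lemma ker_left {m n : ℕ} (A : Fin m → Matrix (Fin n) (Fin n) ℂ)
    (hc : ∀ U : Submodule ℂ (Fin n → ℂ), Module.finrank ℂ U ≤ Module.finrank ℂ (ASpan A U))
    (v : Fin n → ℂ) (hv : ∀ k, (A k)ᴴ *ᵥ v = 0) : v = 0 := by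
  by_contra hne
  let f : (Fin n → ℂ) →ₗ[ℂ] ℂ := dotProductBilin ℂ ℂ (star v)
  have hle : ASpan A ⊤ ≤ LinearMap.ker f := by
    unfold ASpan
    refine iSup_le fun k => ?_
    rintro _ ⟨w, -, rfl⟩
    rw [LinearMap.mem_ker]
    change star v ⬝ᵥ (A k *ᵥ w) = 0
    rw [dotProduct_mulVec]
    have := congrArg star (hv k)
    rw [star_mulVec, conjTranspose_conjTranspose, star_zero] at this
    rw [this, zero_dotProduct]
  have hlt : LinearMap.ker f < ⊤ := by
    rw [lt_top_iff_ne_top]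
    intro h
    have : v ∈ LinearMap.ker f := by rw [h]; trivial
    rw [LinearMap.mem_ker] at this
    have h0 : star v ⬝ᵥ v = 0 := this
    exact hne (dotProduct_star_self_eq_zero.1 h0)
  have h1 := Submodule.finrank_mono hle
  have h2 := Submodule.finrank_lt hlt.ne
  have h3 := hc ⊤
  rw [finrank_top] at h3
  omega

lemma ker_right {m n : ℕ} (A : Fin m → Matrix (Fin n) (Fin n) ℂ)
    (hc : ∀ U : Submodule ℂ (Fin n → ℂ), Module.finrank ℂ U ≤ Module.finrank ℂ (ASpan A U))
    (v : Fin n → ℂ) (hv : ∀ k, A k *ᵥ v = 0) : v = 0 := by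
  by_contra hne
  have h1 := hc (Submodule.span ℂ {v})
  have h2 : ASpan A (Submodule.span ℂ {v}) = ⊥ := by
    unfold ASpan
    rw [eq_bot_iff]
    refine iSup_le fun k => ?_
    rw [Submodule.map_span_le]
    rintro w hw
    rw [Set.mem_singleton_iff.1 hw]
    simp [hv k]
  rw [h2, finrank_span_singleton hne, finrank_bot] at h1
  omega

lemma trace_dual {m n : ℕ} (A : Fin m → Matrix (Fin n) (Fin n) ℂ)
    (X Y : Matrix (Fin n) (Fin n) ℂ) : (Y * Tcp A X).trace = (X * TcpStar A Y).trace := by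
  unfold Tcp TcpStar
  rw [Matrix.mul_sum, Matrix.mul_sum, trace_sum, trace_sum]
  refine Finset.sum_congr rfl fun k _ => ?_
  rw [← Matrix.mul_assoc, ← Matrix.mul_assoc, Matrix.mul_assoc (Y * A k), trace_mul_comm]
  simp only [Matrix.mul_assoc]

lemma Fobj_eq1 {m n : ℕ} (A : Fin m → Matrix (Fin n) (Fin n) ℂ) (c : ℕ)
    (X Y : Matrix (Fin n) (Fin n) ℂ) (s t : ℝ) :
    Fobj A c X Y s t = (Y * (Tcp A X + ((c * t : ℝ) : ℂ) • 1)).trace.re + c * (s * X.trace.re)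
    - Real.log ‖X.det‖ - Real.log ‖Y.det‖ - c * Real.log s - c * Real.log t := by
  unfold Fobj
  rw [Matrix.mul_add, mul_smul_comm, Matrix.mul_one, trace_add, trace_smul, Complex.add_re, smul_eq_mul,
    Complex.re_ofReal_mul]
  ring

lemma Fobj_eq2 {m n : ℕ} (A : Fin m → Matrix (Fin n) (Fin n) ℂ) (c : ℕ)
    (X Y : Matrix (Fin n) (Fin n) ℂ) (s t : ℝ) :
    Fobj A c X Y s t = (X * (TcpStar A Y + ((c * s : ℝ) : ℂ) • 1)).trace.re + c * (t * Y.trace.re)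
    - Real.log ‖X.det‖ - Real.log ‖Y.det‖ - c * Real.log s - c * Real.log t := by
  unfold Fobj
  rw [Matrix.mul_add, mul_smul_comm, Matrix.mul_one, trace_add, trace_smul, Complex.add_re, smul_eq_mul,
    Complex.re_ofReal_mul, trace_dual]
  ring

lemma log_det_inv {n : ℕ} (S : Matrix (Fin n) (Fin n) ℂ) :
    Real.log ‖(S⁻¹).det‖ = - Real.log ‖S.det‖ := by
  rw [det_nonsing_inv, Ring.inverse_eq_inv', norm_inv, Real.log_inv]

lemma scaling_exists {m n : ℕ} (hn : 0 < n) (A : Fin m → Matrix (Fin n) (Fin n) ℂ) (c : ℕ)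
    (hcn : c ≤ n)
    (hc : ∀ U : Submodule ℂ (Fin n → ℂ),
      Module.finrank ℂ U ≤ Module.finrank ℂ (ASpan A U) + c) (ε : ℝ) (hε : 0 < ε) :
    ∃ g h : GL (Fin n) ℂ,
      traceNorm (Tcp (fun k => (g : Matrix (Fin n) (Fin n) ℂ)ᴴ * A k * (h : Matrix (Fin n) (Fin n) ℂ)) 1 - 1)
      + traceNorm (TcpStar (fun k => (g : Matrix (Fin n) (Fin n) ℂ)ᴴ * A k * (h : Matrix (Fin n) (Fin n) ℂ)) 1 - 1)
      ≤ 2 * c + ε := by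
  have : Nonempty (Fin n) := ⟨⟨0, hn⟩⟩
  have hnR : (0 : ℝ) < n := by exact_mod_cast hn
  have hcR : (0 : ℝ) ≤ c := by positivity
  set η : ℝ := ε / (n + c) with hη
  have hη0 : 0 < η := by rw [hη]; positivity
  obtain ⟨δ, hδ, hgap⟩ := scalar_gap hη0
  obtain ⟨C, hC⟩ := Fobj_lower A c hcn hc
  let V : Set ℝ := {r | ∃ (X Y : Matrix (Fin n) (Fin n) ℂ) (s t : ℝ),
    X.PosDef ∧ Y.PosDef ∧ 0 < s ∧ 0 < t ∧ r = Fobj A c X Y s t}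
  have hVne : V.Nonempty := ⟨_, 1, 1, 1, 1, PosDef.one, PosDef.one, one_pos, one_pos, rfl⟩
  have hVb : BddBelow V := ⟨C, by
    rintro _ ⟨X, Y, s, t, hX, hY, hs, ht, rfl⟩
    exact hC X Y s t hX hY hs ht⟩
  obtain ⟨_, ⟨X, Y0, s0, t, hX, hY0, hs0, ht, rfl⟩, hlt⟩ :=
    exists_lt_of_csInf_lt hVne (lt_add_of_pos_right (sInf V) hδ)
  have hR : (Tcp A X + ((c * t : ℝ) : ℂ) • (1 : Matrix (Fin n) (Fin n) ℂ)).PosDef := by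
    refine shift_posDef (Tcp_posSemidef A hX.posSemidef) (by positivity) fun h0 => ?_
    have hc0 : c = 0 := by
      rcases mul_eq_zero.1 h0 with h | h
      · exact_mod_cast h
      · exact absurd h ht.ne'
    subst hc0
    exact Tcp_posDef A hX (ker_left A hc)
  set R := Tcp A X + ((c * t : ℝ) : ℂ) • (1 : Matrix (Fin n) (Fin n) ℂ) with hRdef
  have hY : (R⁻¹).PosDef := hR.inv
  set Y := R⁻¹ with hYdef
  have htrX : 0 < X.trace.re := (Complex.lt_def.1 hX.trace_pos).1
  have htrY : 0 < Y.trace.re := (Complex.lt_def.1 hY.trace_pos).1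
  set s := (X.trace.re)⁻¹ with hs
  have hs0' : 0 < s := inv_pos.2 htrX
  have hRu : IsUnit R.det := (Matrix.isUnit_iff_isUnit_det _).1 hR.isUnit
  have hYR : Y * R = 1 := Matrix.nonsing_inv_mul _ hRu
  have htr1 : ((1 : Matrix (Fin n) (Fin n) ℂ).trace).re = n := by simp
  -- first half-step
  have step1 : Fobj A c X Y s t ≤ Fobj A c X Y0 s0 t := by
    rw [Fobj_eq1, Fobj_eq1, ← hRdef, hYR, htr1, hYdef, log_det_inv]
    have h1 := gap_nonneg hY0 hR
    have h2 := Real.log_le_sub_one_of_pos (mul_pos hs0 htrX)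
    rw [Real.log_mul hs0.ne' htrX.ne'] at h2
    have h3 : s * X.trace.re = 1 := inv_mul_cancel₀ htrX.ne'
    have h4 : Real.log s = - Real.log X.trace.re := by rw [hs, Real.log_inv]
    rw [h3, h4]
    have h5 := mul_le_mul_of_nonneg_left h2 hcR
    linarith
  have hS : (TcpStar A Y + ((c * s : ℝ) : ℂ) • (1 : Matrix (Fin n) (Fin n) ℂ)).PosDef := by
    rw [TcpStar_eq]
    refine shift_posDef (Tcp_posSemidef _ hY.posSemidef) (by positivity) fun h0 => ?_
    have hc0 : c = 0 := by
      rcases mul_eq_zero.1 h0 with h | h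
      · exact_mod_cast h
      · exact absurd h hs0'.ne'
    have hc' : ∀ U : Submodule ℂ (Fin n → ℂ), Module.finrank ℂ U ≤ Module.finrank ℂ (ASpan A U) := by
      intro U; have := hc U; omega
    refine Tcp_posDef _ hY fun v hv => ker_right A hc' v fun k => ?_
    simpa using hv k
  set S := TcpStar A Y + ((c * s : ℝ) : ℂ) • (1 : Matrix (Fin n) (Fin n) ℂ) with hSdef
  have hSu : IsUnit S.det := (Matrix.isUnit_iff_isUnit_det _).1 hS.isUnit
  set t' := (Y.trace.re)⁻¹ with ht'
  have ht'0 : 0 < t' := inv_pos.2 htrY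
  have hinf : sInf V ≤ Fobj A c S⁻¹ Y s t' :=
    csInf_le hVb ⟨_, _, _, _, hS.inv, hY, hs0', ht'0, rfl⟩
  obtain ⟨g, hg⟩ := posDef_factor hY
  obtain ⟨h, hh⟩ := posDef_factor hX
  obtain ⟨hM, hMtr, hMdet⟩ := gap_conj hX hS hh
  have hMgap := gap_eq hM
  set μ := t * Y.trace.re with hμ
  have hμ0 : 0 < μ := mul_pos ht htrY
  have hdec : (∑ i, (hM.1.eigenvalues i - 1 - Real.log (hM.1.eigenvalues i))) +
      c * (μ - 1 - Real.log μ) ≤ δ := by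
    have h1 : Fobj A c X Y s t ≤ Fobj A c S⁻¹ Y s t' + δ := by linarith
    rw [Fobj_eq2, Fobj_eq2, ← hSdef, Matrix.nonsing_inv_mul _ hSu, htr1, log_det_inv S,
      show t' * Y.trace.re = 1 from inv_mul_cancel₀ htrY.ne',
      show Real.log t' = - Real.log Y.trace.re by rw [ht', Real.log_inv], ← hμ] at h1
    rw [← hMgap, hMtr, hMdet, hμ, Real.log_mul ht.ne' htrY.ne', ← hμ]
    linarith
  have hterm : ∀ i, 0 ≤ hM.1.eigenvalues i - 1 - Real.log (hM.1.eigenvalues i) := by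
    intro i
    have := Real.log_le_sub_one_of_pos (hM.eigenvalues_pos i)
    linarith
  have hμt : 0 ≤ μ - 1 - Real.log μ := by
    have := Real.log_le_sub_one_of_pos hμ0
    linarith
  have heig : ∀ i, |hM.1.eigenvalues i - 1| ≤ η := by
    intro i
    apply hgap _ (hM.eigenvalues_pos i)
    have := Finset.single_le_sum (f := fun i => hM.1.eigenvalues i - 1 - Real.log (hM.1.eigenvalues i))
      (fun i _ => hterm i) (Finset.mem_univ i)
    have h2 := mul_nonneg hcR hμt
    linarith
  have hμη : c * μ ≤ c * (1 + η) := by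
    rcases Nat.eq_zero_or_pos c with h0 | h0
    · rw [h0]; simp
    · have hc1 : (1 : ℝ) ≤ c := by exact_mod_cast h0
      have h2 : μ - 1 - Real.log μ ≤ δ := by
        have := Finset.sum_nonneg (s := Finset.univ) (fun i _ => hterm i)
        nlinarith
      have := (abs_le.1 (hgap μ hμ0 h2)).2
      exact mul_le_mul_of_nonneg_left (by linarith) hcR
  set G := (g : Matrix (Fin n) (Fin n) ℂ) with hG
  set K := (h : Matrix (Fin n) (Fin n) ℂ) with hK
  have eT : Tcp (fun k => Gᴴ * A k * K) 1 = Gᴴ * Tcp A X * G := by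
    unfold Tcp
    rw [Matrix.mul_sum, Matrix.sum_mul]
    refine Finset.sum_congr rfl fun k _ => ?_
    rw [hh]
    simp only [conjTranspose_mul, conjTranspose_conjTranspose, Matrix.mul_one, Matrix.mul_assoc]
  have eT' : TcpStar (fun k => Gᴴ * A k * K) 1 = Kᴴ * TcpStar A Y * K := by
    unfold TcpStar
    rw [Matrix.mul_sum, Matrix.sum_mul]
    refine Finset.sum_congr rfl fun k _ => ?_
    rw [hg]
    simp only [conjTranspose_mul, conjTranspose_conjTranspose, Matrix.mul_one, Matrix.mul_assoc]
  refine ⟨g, h, ?_⟩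
  rw [← hG, ← hK, eT, eT']
  have hGR : Gᴴ * R * G = 1 := by
    rw [hg, Matrix.mul_assoc] at hYR
    exact mul_eq_one_comm.1 hYR
  have b1 : traceNorm (Gᴴ * Tcp A X * G - 1) ≤ n * 0 + ((((c * t : ℝ) : ℂ) • (Gᴴ * G)).trace).re := by
    refine traceNorm_upper (K := 0) ?_ ?_ ?_ ?_ ?_
    · exact ((Tcp_posSemidef A hX.posSemidef).conjTranspose_mul_mul_same G).1.sub isHermitian_one
    · rw [← hGR, hRdef, Matrix.mul_add, Matrix.add_mul, mul_smul_comm, Matrix.mul_one, smul_mul_assoc]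
      abel
    · exact (posSemidef_conjTranspose_mul_self G).smul (by
        have : (0 : ℝ) ≤ c * t := by positivity
        exact_mod_cast this)
    · simpa using PosSemidef.zero
    · simpa using PosSemidef.zero
  have b1' : ((((c * t : ℝ) : ℂ) • (Gᴴ * G)).trace).re = c * μ := by
    rw [trace_smul, trace_mul_comm, ← hg, smul_eq_mul, Complex.re_ofReal_mul, hμ]
    ring
  obtain ⟨u, hu, hu', hsp⟩ := spec_exists hM.1
  have hshift : ∀ a b : ℝ, (a : ℂ) • (1 : Matrix (Fin n) (Fin n) ℂ) + (b : ℂ) • (Kᴴ * S * K - 1) =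
      u * diagonal (fun i => ((a + b * (hM.1.eigenvalues i - 1) : ℝ) : ℂ)) * uᴴ := by
    intro a b
    have e1 : (diagonal (fun i => ((a + b * (hM.1.eigenvalues i - 1) : ℝ) : ℂ)) : Matrix (Fin n) (Fin n) ℂ) =
      (a : ℂ) • 1 + (b : ℂ) • (diagonal (fun i => ((hM.1.eigenvalues i : ℝ) : ℂ)) - 1) := by
      ext i j
      by_cases hij : i = j
      · subst hij; simp
      · simp [hij]
    rw [e1]
    conv_lhs => rw [hsp]
    simp only [Matrix.mul_add, Matrix.mul_sub, Matrix.add_mul, Matrix.sub_mul, mul_smul_comm, smul_mul_assoc,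
      Matrix.mul_one, hu']
  have hpsd : ∀ a b : ℝ, (∀ i, 0 ≤ a + b * (hM.1.eigenvalues i - 1)) →
      ((a : ℂ) • (1 : Matrix (Fin n) (Fin n) ℂ) + (b : ℂ) • (Kᴴ * S * K - 1)).PosSemidef := by
    intro a b hab
    rw [hshift]
    refine PosSemidef.mul_mul_conjTranspose_same ?_ u
    exact PosSemidef.diagonal fun i => by
      have := hab i
      simp only [Pi.zero_apply]
      exact_mod_cast this
  have b2 : traceNorm (Kᴴ * TcpStar A Y * K - 1) ≤ n * η + ((((c * s : ℝ) : ℂ) • (Kᴴ * K)).trace).re := by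
    refine traceNorm_upper (K := Kᴴ * S * K - 1) ?_ ?_ ?_ ?_ ?_
    · rw [TcpStar_eq]
      exact ((Tcp_posSemidef _ hY.posSemidef).conjTranspose_mul_mul_same K).1.sub isHermitian_one
    · rw [hSdef, Matrix.mul_add, Matrix.add_mul, mul_smul_comm, Matrix.mul_one, smul_mul_assoc]
      abel
    · exact (posSemidef_conjTranspose_mul_self K).smul (by
        have : (0 : ℝ) ≤ c * s := by positivity
        exact_mod_cast this)
    · have := hpsd η (-1) (fun i => by have := abs_le.1 (heig i); linarith)
      convert this using 1
      simp [sub_eq_add_neg]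
      exact add_comm _ _
    · have := hpsd η 1 (fun i => by have := abs_le.1 (heig i); linarith)
      convert this using 1
      simp
  have b2' : ((((c * s : ℝ) : ℂ) • (Kᴴ * K)).trace).re = c := by
    rw [trace_smul, trace_mul_comm, ← hh, smul_eq_mul, Complex.re_ofReal_mul, hs, mul_assoc,
      inv_mul_cancel₀ htrX.ne', mul_one]
  rw [b1'] at b1
  rw [b2'] at b2
  have hfin : (n + c) * η = ε := by
    rw [hη]; field_simp
  linarith

lemma residual_lower {m n : ℕ} (A : Fin m → Matrix (Fin n) (Fin n) ℂ)
    (U : Submodule ℂ (Fin n → ℂ)) (g h : GL (Fin n) ℂ) :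
    2 * ((Module.finrank ℂ U : ℝ) - (Module.finrank ℂ (ASpan A U) : ℝ)) ≤
      traceNorm (Tcp (fun k => (g : Matrix (Fin n) (Fin n) ℂ)ᴴ * A k * (h : Matrix (Fin n) (Fin n) ℂ)) 1 - 1)
      + traceNorm (TcpStar (fun k => (g : Matrix (Fin n) (Fin n) ℂ)ᴴ * A k * (h : Matrix (Fin n) (Fin n) ℂ)) 1 - 1) := by
  set G := (g : Matrix (Fin n) (Fin n) ℂ)
  set K := (h : Matrix (Fin n) (Fin n) ℂ) with hK
  set K' := ((h⁻¹ : GL (Fin n) ℂ) : Matrix (Fin n) (Fin n) ℂ) with hK'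
  have hKK : K * K' = 1 := by rw [hK, hK', ← Units.val_mul]; simp
  have hb := dual_bound (fun k => Gᴴ * A k * K) (U.map K'.mulVecLin)
  have hinj : Function.Injective K'.mulVecLin :=
    Matrix.mulVec_injective_of_isUnit (Units.isUnit h⁻¹)
  have h1 : Module.finrank ℂ (U.map K'.mulVecLin) = Module.finrank ℂ U :=
    (Submodule.equivMapOfInjective _ hinj U).finrank_eq.symm
  have h2 : ASpan (fun k => Gᴴ * A k * K) (U.map K'.mulVecLin) ≤ (ASpan A U).map Gᴴ.mulVecLin := by
    unfold ASpan
    refine iSup_le fun k => ?_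
    rintro _ ⟨_, ⟨w, hw, rfl⟩, rfl⟩
    refine ⟨A k *ᵥ w, Submodule.mem_iSup_of_mem k ⟨w, hw, rfl⟩, ?_⟩
    simp only [mulVecLin_apply, Matrix.mulVec_mulVec]
    rw [Matrix.mul_assoc, hKK, Matrix.mul_one]
  have h3 := Submodule.finrank_mono h2
  have h4 := Submodule.finrank_map_le Gᴴ.mulVecLin (ASpan A U)
  have h5 : (Module.finrank ℂ (ASpan (fun k => Gᴴ * A k * K) (U.map K'.mulVecLin)) : ℝ) ≤
      (Module.finrank ℂ (ASpan A U) : ℝ) := by exact_mod_cast h3.trans h4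
  rw [h1] at hb
  linarith

/-- The nc-corank `max_U (dim U - dim 𝒜U)` equals one-half of the minimum
trace-norm scaling residual. -/
theorem ncCorank_eq_half_inf_traceNorm_residual {m n : ℕ}
    (A : Fin m → Matrix (Fin n) (Fin n) ℂ) :
    (⨆ U : Submodule ℂ (Fin n → ℂ),
        ((Module.finrank ℂ U : ℝ) - (Module.finrank ℂ (ASpan A U) : ℝ)))
      = (1 / 2) *
        ⨅ gh : GL (Fin n) ℂ × GL (Fin n) ℂ,
          (traceNorm (Tcp (fun k => (↑gh.1)ᴴ * A k * (↑gh.2 : Matrix (Fin n) (Fin n) ℂ)) 1 - 1)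
            + traceNorm
              (TcpStar (fun k => (↑gh.1)ᴴ * A k * (↑gh.2 : Matrix (Fin n) (Fin n) ℂ)) 1 - 1)) := by
  have hex : ∃ U0 : Submodule ℂ (Fin n → ℂ), ∀ U : Submodule ℂ (Fin n → ℂ),
      ((Module.finrank ℂ U : ℝ) - (Module.finrank ℂ (ASpan A U) : ℝ)) ≤
      ((Module.finrank ℂ U0 : ℝ) - (Module.finrank ℂ (ASpan A U0) : ℝ)) := by
    let D : Set ℤ := Set.range fun U : Submodule ℂ (Fin n → ℂ) =>
      ((Module.finrank ℂ U : ℤ) - (Module.finrank ℂ (ASpan A U) : ℤ))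
    have hD : BddAbove D := by
      refine ⟨n, ?_⟩
      rintro _ ⟨U, rfl⟩
      have := Submodule.finrank_le U
      rw [Module.finrank_fin_fun] at this
      simp only
      omega
    obtain ⟨U0, hU0⟩ := Int.csSup_mem (s := D) ⟨_, ⊥, rfl⟩ hD
    refine ⟨U0, fun U => ?_⟩
    have h1 := le_csSup hD ⟨U, rfl⟩
    rw [← hU0] at h1
    exact_mod_cast h1
  obtain ⟨U0, hU0⟩ := hex
  have h00 : Module.finrank ℂ (ASpan A U0) ≤ Module.finrank ℂ U0 := by
    have h1 := hU0 ⊥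
    have h2 : ASpan A ⊥ = ⊥ := by simp [ASpan]
    rw [h2] at h1
    have h3 : (Module.finrank ℂ (ASpan A U0) : ℝ) ≤ Module.finrank ℂ U0 := by
      simp only [finrank_bot] at h1
      linarith
    exact_mod_cast h3
  obtain ⟨c, hcU⟩ := Nat.exists_eq_add_of_le h00
  have hcr : (Module.finrank ℂ U0 : ℝ) - (Module.finrank ℂ (ASpan A U0) : ℝ) = c := by
    rw [hcU]; push_cast; ring
  have hcn : c ≤ n := by
    have := Submodule.finrank_le U0
    rw [Module.finrank_fin_fun] at this
    omega
  have hc : ∀ U : Submodule ℂ (Fin n → ℂ),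
      Module.finrank ℂ U ≤ Module.finrank ℂ (ASpan A U) + c := by
    intro U
    have h1 := hU0 U
    rw [hcr] at h1
    have h2 : (Module.finrank ℂ U : ℝ) ≤ Module.finrank ℂ (ASpan A U) + c := by linarith
    exact_mod_cast h2
  have hsup : (⨆ U : Submodule ℂ (Fin n → ℂ),
        ((Module.finrank ℂ U : ℝ) - (Module.finrank ℂ (ASpan A U) : ℝ))) = c := by
    rw [← hcr]
    exact le_antisymm (ciSup_le hU0) (le_ciSup (f := fun U : Submodule ℂ (Fin n → ℂ) =>
        ((Module.finrank ℂ U : ℝ) - (Module.finrank ℂ (ASpan A U) : ℝ)))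
        ⟨_, by rintro _ ⟨U, rfl⟩; exact hU0 U⟩ U0)
  have hlow : ∀ gh : GL (Fin n) ℂ × GL (Fin n) ℂ, 2 * (c : ℝ) ≤
      (traceNorm (Tcp (fun k => (↑gh.1)ᴴ * A k * (↑gh.2 : Matrix (Fin n) (Fin n) ℂ)) 1 - 1)
            + traceNorm
              (TcpStar (fun k => (↑gh.1)ᴴ * A k * (↑gh.2 : Matrix (Fin n) (Fin n) ℂ)) 1 - 1)) := by
    intro gh
    rw [← hcr]
    exact residual_lower A U0 gh.1 gh.2
  have hbdd := (⟨2 * (c : ℝ), by rintro _ ⟨gh, rfl⟩; exact hlow gh⟩ : BddBelow (Set.range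
    fun gh : GL (Fin n) ℂ × GL (Fin n) ℂ =>
      (traceNorm (Tcp (fun k => (↑gh.1)ᴴ * A k * (↑gh.2 : Matrix (Fin n) (Fin n) ℂ)) 1 - 1)
            + traceNorm
              (TcpStar (fun k => (↑gh.1)ᴴ * A k * (↑gh.2 : Matrix (Fin n) (Fin n) ℂ)) 1 - 1))))
  have hinf := le_ciInf hlow
  rw [hsup]
  have hup : (⨅ gh : GL (Fin n) ℂ × GL (Fin n) ℂ,
          (traceNorm (Tcp (fun k => (↑gh.1)ᴴ * A k * (↑gh.2 : Matrix (Fin n) (Fin n) ℂ)) 1 - 1)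
            + traceNorm
              (TcpStar (fun k => (↑gh.1)ᴴ * A k * (↑gh.2 : Matrix (Fin n) (Fin n) ℂ)) 1 - 1)))
      ≤ 2 * (c : ℝ) := by
    refine le_of_forall_pos_le_add fun ε hε => ?_
    rcases Nat.eq_zero_or_pos n with hn | hn
    · subst hn
      refine (ciInf_le hbdd (1, 1)).trans ?_
      have h0 : ∀ Z : Matrix (Fin 0) (Fin 0) ℂ, traceNorm Z = 0 := by
        intro Z
        simp [traceNorm, Matrix.trace]
      simp only [h0]
      have hc0 : (0 : ℝ) ≤ c := Nat.cast_nonneg c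
      linarith
    · obtain ⟨g, h, hgh⟩ := scaling_exists hn A c hcn hc ε hε
      exact (ciInf_le hbdd (g, h)).trans hgh
  linarith
end
end

section
/- Let 𝒜 = (A_1,…,A_m) be an m-tuple of n×n complex matrices such that Σ_{k=1}^m A_k A_kᴴ is positive definite, and let f(X) := log det(Σ_{k=1}^m A_k X A_kᴴ) − log det X on positive definite Hermitian X. Let H = u (diag λ) uᴴ be Hermitian, where u is unitary, λ ∈ ℝ^n with λ_1 ≥ λ_2 ≥ ⋯ ≥ λ_n, and set λ_{n+1} := 0. For i = 1,…,n, let U_i ≤ ℂ^n be the span of the first i columns of u. Then lim_{t→∞} (f(e^{tH}) − f(I))/t = Σ_{i=1}^n (λ_i − λ_{i+1}) (dim 𝒜U_i − dim U_i). -/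
noncomputable section
open scoped Classical
open Matrix Filter
open scoped ComplexOrder Topology

/-- `f(X) = log det (∑ k, A_k X A_kᴴ) - log det X`. -/
def fdet {m n : ℕ} (A : Fin m → Matrix (Fin n) (Fin n) ℂ)
    (X : Matrix (Fin n) (Fin n) ℂ) : ℝ :=
  Real.log (Tcp A X).det.re - Real.log X.det.re

/-- The span of the first `j` columns of `u`. -/
def colSpan {n : ℕ} (u : Matrix (Fin n) (Fin n) ℂ) (j : ℕ) : Submodule ℂ (Fin n → ℂ) :=
  Submodule.span ℂ {w : Fin n → ℂ | ∃ k : Fin n, (k : ℕ) < j ∧ w = fun r => u r k}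

/-- A wide matrix with `W Wᴴ` invertible has a nonsingular maximal minor. -/
theorem exists_minor {n : ℕ} {C : Type} [Fintype C] [DecidableEq C]
    (W : Matrix (Fin n) C ℂ) (hW : IsUnit (W * Wᴴ).det) :
    ∃ σ : Fin n → C, (W.submatrix id σ).det ≠ 0 := by
  have htop : Submodule.span ℂ (Set.range W.col) = ⊤ := by
    rw [← Matrix.range_mulVecLin, LinearMap.range_eq_top]
    intro y
    refine ⟨Wᴴ *ᵥ ((W * Wᴴ)⁻¹ *ᵥ y), ?_⟩
    rw [Matrix.mulVecLin_apply, Matrix.mulVec_mulVec, Matrix.mulVec_mulVec,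
      Matrix.mul_nonsing_inv _ hW, Matrix.one_mulVec]
  obtain ⟨κ, a, ha, hs, hli⟩ := exists_linearIndependent' ℂ W.col
  let b : Module.Basis κ ℂ (Fin n → ℂ) := Module.Basis.mk hli (by rw [hs, htop])
  let e : κ ≃ Fin n := b.indexEquiv (Pi.basisFun ℂ (Fin n))
  refine ⟨a ∘ e.symm, ?_⟩
  have h2 : LinearIndependent ℂ (W.submatrix id (a ∘ e.symm)).col :=
    hli.comp e.symm e.symm.injective
  rw [Matrix.linearIndependent_cols_iff_isUnit, Matrix.isUnit_iff_isUnit_det] at h2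
  exact h2.ne_zero

/-- Greedy choice: a nonsingular minor of minimal total level is adapted to the filtration. -/
theorem exists_adapted {n : ℕ} {C : Type} [Fintype C] [DecidableEq C]
    (W : Matrix (Fin n) C ℂ) (hW : IsUnit (W * Wᴴ).det) (lev : C → ℕ) :
    ∃ (σ : Fin n → C) (X : Matrix (Fin n) C ℂ), (W.submatrix id σ).det ≠ 0 ∧
      W = W.submatrix id σ * X ∧ (∀ r s, X r (σ s) = if r = s then 1 else 0) ∧
      ∀ r c, X r c ≠ 0 → lev (σ r) ≤ lev c := by
  let S : Finset (Fin n → C) := Finset.univ.filter fun σ => (W.submatrix id σ).det ≠ 0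
  have hS : S.Nonempty := by
    obtain ⟨σ, h⟩ := exists_minor W hW
    exact ⟨σ, by simp [S, h]⟩
  obtain ⟨σ, hσ, hmin⟩ := S.exists_min_image (fun σ => ∑ r, lev (σ r)) hS
  have hdet : (W.submatrix id σ).det ≠ 0 := by simpa [S] using hσ
  set B := W.submatrix id σ with hB
  have hBu : IsUnit B.det := isUnit_iff_ne_zero.2 hdet
  refine ⟨σ, B⁻¹ * W, hdet, ?_, ?_, ?_⟩
  · rw [← Matrix.mul_assoc, Matrix.mul_nonsing_inv _ hBu, Matrix.one_mul]
  · intro r s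
    have : (B⁻¹ * B) r s = (1 : Matrix (Fin n) (Fin n) ℂ) r s := by
      rw [Matrix.nonsing_inv_mul _ hBu]
    rw [Matrix.one_apply] at this
    rw [← this]
    simp [Matrix.mul_apply, hB]
  · intro r c hX
    have hup : W.submatrix id (Function.update σ r c) = B.updateCol r (W.col c) := by
      ext i j
      by_cases hj : j = r
      · subst hj; simp
      · simp [hj, hB]
    have hd : (W.submatrix id (Function.update σ r c)).det = B.det * (B⁻¹ * W) r c := by
      rw [hup, ← Matrix.cramer_apply, Matrix.cramer_eq_adjugate_mulVec,
        Matrix.inv_def, Ring.inverse_eq_inv']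
      simp only [Matrix.smul_mul, Matrix.smul_apply, smul_eq_mul]
      rw [mul_inv_cancel_left₀ hdet]
      rfl
    have hmem : Function.update σ r c ∈ S := by
      simp only [S, Finset.mem_filter, Finset.mem_univ, true_and]
      rw [hd]; exact mul_ne_zero hdet hX
    have h := hmin _ hmem
    rw [← Finset.add_sum_erase _ _ (Finset.mem_univ r),
      ← Finset.add_sum_erase _ (fun x => lev (Function.update σ r c x)) (Finset.mem_univ r)] at h
    have h3 : ∑ x ∈ Finset.univ.erase r, lev (Function.update σ r c x)
        = ∑ x ∈ Finset.univ.erase r, lev (σ x) := by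
      refine Finset.sum_congr rfl fun x hx => ?_
      rw [Function.update_of_ne (Finset.ne_of_mem_erase hx)]
    rw [h3] at h
    simpa using h

theorem finrank_span_cols {n : ℕ} (B : Matrix (Fin n) (Fin n) ℂ) (hB : B.det ≠ 0)
    (p : Fin n → Prop) [DecidablePred p] :
    Module.finrank ℂ (Submodule.span ℂ {w | ∃ r, p r ∧ w = B.col r})
      = (Finset.univ.filter p).card := by
  have hli : LinearIndependent ℂ B.col := by
    rw [Matrix.linearIndependent_cols_iff_isUnit, Matrix.isUnit_iff_isUnit_det]
    exact isUnit_iff_ne_zero.2 hB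
  have h2 : LinearIndependent ℂ (fun r : {r // p r} => B.col r) :=
    hli.comp _ Subtype.val_injective
  have h := finrank_span_eq_card h2
  rw [Fintype.card_subtype] at h
  rw [← h]
  have hset : {w | ∃ r, p r ∧ w = B.col r} = Set.range (fun r : {r // p r} => B.col r) := by
    ext w
    constructor
    · rintro ⟨r, hr, rfl⟩; exact ⟨⟨r, hr⟩, rfl⟩
    · rintro ⟨⟨r, hr⟩, rfl⟩; exact ⟨r, hr, rfl⟩
  rw [hset]

theorem telescope {n : ℕ} (eig : Fin n → ℝ) (j : Fin n) :
    ∑ i ∈ Finset.range n, (if (j : ℕ) ≤ i then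
      ((if h : i < n then eig ⟨i, h⟩ else 0) - (if h : i + 1 < n then eig ⟨i + 1, h⟩ else 0))
        else 0) = eig j := by
  let g : ℕ → ℝ := fun i => if h : i < n then eig ⟨i, h⟩ else 0
  have h1 : ∀ N, (j : ℕ) ≤ N →
      ∑ i ∈ Finset.range N, (if (j : ℕ) ≤ i then g i - g (i + 1) else 0) = g j - g N := by
    intro N hN
    induction N, hN using Nat.le_induction with
    | base =>
      rw [Finset.sum_eq_zero]; · simp
      intro i hi
      rw [if_neg (by simpa using hi)]
    | succ k hk ih => rw [Finset.sum_range_succ, ih, if_pos hk]; ring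
  have := h1 n j.2.le
  simpa [g] using this

theorem abel {n : ℕ} (eig : Fin n → ℝ) (τ : Fin n → Fin n) :
    ∑ i ∈ Finset.range n,
      ((if h : i < n then eig ⟨i, h⟩ else 0) - (if h : i + 1 < n then eig ⟨i + 1, h⟩ else 0))
        * ((Finset.univ.filter fun r => (τ r : ℕ) < i + 1).card : ℝ) = ∑ r, eig (τ r) := by
  rw [Finset.sum_congr rfl fun r _ => (telescope eig (τ r)).symm, Finset.sum_comm]
  refine Finset.sum_congr rfl fun i _ => ?_
  rw [Finset.card_filter]
  push_cast
  rw [Finset.mul_sum]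
  refine Finset.sum_congr rfl fun r _ => ?_
  simp only [Nat.lt_succ_iff, mul_ite, mul_one, mul_zero]

/-- `W = (A_k u)_{k}` as a block row. -/
def Wmat {m n : ℕ} (A : Fin m → Matrix (Fin n) (Fin n) ℂ) (u : Matrix (Fin n) (Fin n) ℂ) :
    Matrix (Fin n) (Fin m × Fin n) ℂ := Matrix.of fun r c => (A c.1 * u) r c.2

theorem Tcp_eq {m n : ℕ} (A : Fin m → Matrix (Fin n) (Fin n) ℂ) (u : Matrix (Fin n) (Fin n) ℂ)
    (d : Fin n → ℂ) :
    Tcp A (u * diagonal d * uᴴ) = Wmat A u * diagonal (fun c : Fin m × Fin n => d c.2) * (Wmat A u)ᴴ := by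
  have h : ∀ k, A k * (u * diagonal d * uᴴ) * (A k)ᴴ = (A k * u) * diagonal d * (A k * u)ᴴ := by
    intro k; simp only [Matrix.conjTranspose_mul, Matrix.mul_assoc]
  ext r s
  simp only [Tcp, h, Matrix.sum_apply]
  rw [Matrix.mul_apply, Fintype.sum_prod_type]
  refine Finset.sum_congr rfl fun k _ => ?_
  rw [Matrix.mul_apply]
  refine Finset.sum_congr rfl fun j _ => ?_
  rw [Matrix.mul_diagonal, Matrix.mul_diagonal]
  rfl

theorem Wmat_col {m n : ℕ} (A : Fin m → Matrix (Fin n) (Fin n) ℂ)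
    (u : Matrix (Fin n) (Fin n) ℂ) (c : Fin m × Fin n) :
    (Wmat A u).col c = A c.1 *ᵥ (fun r => u r c.2) := by
  ext r; rfl

theorem ASpan_colSpan {m n : ℕ} (A : Fin m → Matrix (Fin n) (Fin n) ℂ)
    (u : Matrix (Fin n) (Fin n) ℂ) (j : ℕ) :
    ASpan A (colSpan u j) =
      Submodule.span ℂ {w | ∃ c : Fin m × Fin n, (c.2 : ℕ) < j ∧ w = (Wmat A u).col c} := by
  apply le_antisymm
  · refine iSup_le fun k => ?_
    rw [colSpan, Submodule.map_span, Submodule.span_le]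
    rintro _ ⟨_, ⟨l, hl, rfl⟩, rfl⟩
    exact Submodule.subset_span ⟨(k, l), hl, (Wmat_col A u (k, l)).symm⟩
  · rw [Submodule.span_le]
    rintro _ ⟨⟨k, l⟩, hl, rfl⟩
    refine Submodule.mem_iSup_of_mem k ?_
    rw [Wmat_col]
    exact Submodule.mem_map_of_mem (f := (A k).mulVecLin) (Submodule.subset_span ⟨l, hl, rfl⟩)

theorem span_adapted {n : ℕ} {C : Type} [Fintype C] [DecidableEq C]
    (W X : Matrix (Fin n) C ℂ) (lev : C → ℕ) (σ : Fin n → C)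
    (hWX : W = W.submatrix id σ * X) (hX : ∀ r c, X r c ≠ 0 → lev (σ r) ≤ lev c) (j : ℕ) :
    Submodule.span ℂ {w | ∃ c : C, lev c < j ∧ w = W.col c} =
    Submodule.span ℂ {w | ∃ r, lev (σ r) < j ∧ w = (W.submatrix id σ).col r} := by
  apply le_antisymm
  · rw [Submodule.span_le]
    rintro _ ⟨c, hc, rfl⟩
    have : W.col c = ∑ r, X r c • (W.submatrix id σ).col r := by
      ext i
      have := congrFun (congrFun hWX i) c
      rw [Matrix.mul_apply] at this
      simp only [Finset.sum_apply, Pi.smul_apply, smul_eq_mul]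
      rw [Matrix.col_apply, this]
      exact Finset.sum_congr rfl fun r _ => mul_comm _ _
    rw [this]
    refine Submodule.sum_mem _ fun r _ => ?_
    by_cases h0 : X r c = 0
    · rw [h0, zero_smul]; exact Submodule.zero_mem _
    · exact Submodule.smul_mem _ _
        (Submodule.subset_span ⟨r, lt_of_le_of_lt (hX r c h0) hc, rfl⟩)
  · refine Submodule.span_mono ?_
    rintro _ ⟨r, hr, rfl⟩
    exact ⟨σ r, hr, rfl⟩

/-- Rescaled coordinates. -/
def Ymat {n : ℕ} {C : Type} (X : Matrix (Fin n) C ℂ) (μ : Fin n → ℝ) (l : C → ℝ) (t : ℝ) :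
    Matrix (Fin n) C ℂ :=
  Matrix.of fun r c => X r c * (Real.exp (t * ((l c - μ r) / 2)) : ℝ)

/-- Limit of the rescaled coordinates. -/
def Ylim {n : ℕ} {C : Type} (X : Matrix (Fin n) C ℂ) (μ : Fin n → ℝ) (l : C → ℝ) :
    Matrix (Fin n) C ℂ :=
  Matrix.of fun r c => if l c = μ r then X r c else 0

theorem Ymat_tendsto {n : ℕ} {C : Type} (X : Matrix (Fin n) C ℂ) (μ : Fin n → ℝ) (l : C → ℝ)
    (hX : ∀ r c, X r c ≠ 0 → l c ≤ μ r) :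
    Tendsto (Ymat X μ l) atTop (𝓝 (Ylim X μ l)) := by
  refine tendsto_pi_nhds.2 fun r => tendsto_pi_nhds.2 fun c => ?_
  show Tendsto (fun t : ℝ => X r c * ((Real.exp (t * ((l c - μ r) / 2)) : ℝ) : ℂ)) atTop
    (𝓝 (if l c = μ r then X r c else 0))
  by_cases h0 : X r c = 0
  · simp [h0]
  by_cases he : l c = μ r
  · simp [he]
  have hlt : l c < μ r := lt_of_le_of_ne (hX r c h0) he
  rw [if_neg he]
  have h1 : Tendsto (fun t : ℝ => Real.exp (t * ((l c - μ r) / 2))) atTop (𝓝 0) :=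
    Real.tendsto_exp_atBot.comp
      (tendsto_id.atTop_mul_const_of_neg (by linarith : (l c - μ r) / 2 < 0))
  have h2 := (Complex.continuous_ofReal.tendsto 0).comp h1
  simpa using h2.const_mul (X r c)

theorem Ylim_posDef {n : ℕ} {C : Type} [Fintype C] (X : Matrix (Fin n) C ℂ) (μ : Fin n → ℝ)
    (l : C → ℝ) (σ : Fin n → C) (hμ : ∀ r, l (σ r) = μ r)
    (hσ : ∀ r s, X r (σ s) = if r = s then 1 else 0) :
    (Ylim X μ l * (Ylim X μ l)ᴴ).PosDef := by
  apply Matrix.PosDef.mul_conjTranspose_self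
  have key : ∀ v : Fin n → ℂ, ∀ s, (v ᵥ* Ylim X μ l) (σ s) = v s := by
    intro v s
    simp only [Matrix.vecMul, dotProduct, Ylim, Matrix.of_apply, hσ]
    rw [Finset.sum_eq_single s]
    · simp [hμ]
    · intro r _ hr; simp [hr]
    · simp
  intro v w h
  ext s
  rw [← key v s, ← key w s]
  exact congrFun h _

theorem det_factor {n : ℕ} {C : Type} [Fintype C] [DecidableEq C] (B : Matrix (Fin n) (Fin n) ℂ)
    (X : Matrix (Fin n) C ℂ) (μ : Fin n → ℝ) (l : C → ℝ) (t : ℝ) :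
    ((B * X) * diagonal (fun c => ((Real.exp (t * l c) : ℝ) : ℂ)) * (B * X)ᴴ).det =
      ((Complex.normSq B.det * Real.exp (t * ∑ r, μ r) : ℝ) : ℂ) *
        (Ymat X μ l t * (Ymat X μ l t)ᴴ).det := by
  let D : Matrix (Fin n) (Fin n) ℂ := diagonal (fun r => ((Real.exp (t * (μ r / 2)) : ℝ) : ℂ))
  let E : Matrix C C ℂ := diagonal (fun c => ((Real.exp (t * (l c / 2)) : ℝ) : ℂ))
  have hE : diagonal (fun c => ((Real.exp (t * l c) : ℝ) : ℂ)) = E * Eᴴ := by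
    simp only [E, Matrix.diagonal_conjTranspose, Matrix.diagonal_mul_diagonal]
    congr 1
    ext c
    simp only [Pi.star_apply, Complex.star_def, Complex.conj_ofReal]
    rw [← Complex.ofReal_mul, ← Real.exp_add]
    congr 2; ring
  have hXE : X * E = D * Ymat X μ l t := by
    ext r c
    simp only [E, D, Matrix.mul_diagonal, Matrix.diagonal_mul, Ymat, Matrix.of_apply]
    rw [mul_left_comm, ← Complex.ofReal_mul, ← Real.exp_add]
    congr 3; ring
  have hM : (B * X) * (E * Eᴴ) * (B * X)ᴴ =
      (B * D) * (Ymat X μ l t * (Ymat X μ l t)ᴴ) * (B * D)ᴴ := by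
    calc (B * X) * (E * Eᴴ) * (B * X)ᴴ = B * (X * E) * (B * (X * E))ᴴ := by
          simp only [Matrix.conjTranspose_mul, Matrix.mul_assoc]
      _ = _ := by
          rw [hXE]; simp only [Matrix.conjTranspose_mul, Matrix.mul_assoc]
  have hD : D.det = ((Real.exp (t * ((∑ r, μ r) / 2)) : ℝ) : ℂ) := by
    simp only [D, Matrix.det_diagonal]
    rw [← Complex.ofReal_prod, ← Real.exp_sum, ← Finset.mul_sum, Finset.sum_div]
  rw [hE, hM, Matrix.det_mul, Matrix.det_mul, Matrix.det_conjTranspose, Matrix.det_mul, hD]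
  have h4 : Real.exp (t * ∑ r, μ r) =
      Real.exp (t * ((∑ r, μ r) / 2)) * Real.exp (t * ((∑ r, μ r) / 2)) := by
    rw [← Real.exp_add]; congr 1; ring
  rw [h4]
  rw [Complex.ofReal_mul, Complex.ofReal_mul, ← Complex.mul_conj]
  simp only [star_mul', Complex.star_def, Complex.conj_ofReal]
  ring

theorem exp_H {n : ℕ} (u : Matrix (Fin n) (Fin n) ℂ) (hu : u ∈ Matrix.unitaryGroup (Fin n) ℂ)
    (eig : Fin n → ℝ) (t : ℝ) :
    NormedSpace.exp (t • (u * Matrix.diagonal (fun i => (eig i : ℂ)) * uᴴ)) =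
      u * diagonal (fun i => ((Real.exp (t * eig i) : ℝ) : ℂ)) * uᴴ := by
  have huu : u * uᴴ = 1 := Matrix.mem_unitaryGroup_iff.1 hu
  have hinv : u⁻¹ = uᴴ := Matrix.inv_eq_right_inv huu
  have hunit : IsUnit u := (Matrix.isUnit_iff_isUnit_det _).2 (Matrix.isUnit_det_of_right_inverse huu)
  rw [← hinv, ← Matrix.smul_mul, ← Matrix.mul_smul, Matrix.exp_conj _ _ hunit,
    ← Matrix.diagonal_smul, Matrix.exp_diagonal]
  congr 3
  ext i
  rw [Pi.coe_exp, ← Complex.exp_eq_exp_ℂ]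
  simp

/-- The recession function of `f` at `H = u (diag λ) uᴴ`, with `λ₁ ≥ ⋯ ≥ λₙ` and
`λ_{n+1} := 0`, equals `∑ i, (λ_i - λ_{i+1}) (dim 𝒜U_i - dim U_i)`, where `U_i` is the
span of the first `i` columns of `u`. -/
theorem fdet_recession_formula {m n : ℕ} (A : Fin m → Matrix (Fin n) (Fin n) ℂ)
    (hA : (∑ k, A k * (A k)ᴴ).PosDef)
    (u : Matrix (Fin n) (Fin n) ℂ) (hu : u ∈ Matrix.unitaryGroup (Fin n) ℂ)
    (eig : Fin n → ℝ) (heig : Antitone eig)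
    (H : Matrix (Fin n) (Fin n) ℂ)
    (hH : H = u * Matrix.diagonal (fun i => (eig i : ℂ)) * uᴴ) :
    Tendsto (fun t : ℝ => (fdet A (NormedSpace.exp (t • H)) - fdet A 1) / t) atTop
      (𝓝 (∑ i ∈ Finset.range n,
        ((if h : i < n then eig ⟨i, h⟩ else 0) - (if h : i + 1 < n then eig ⟨i + 1, h⟩ else 0))
          * ((Module.finrank ℂ (ASpan A (colSpan u (i + 1))) : ℝ)
              - (Module.finrank ℂ (colSpan u (i + 1)) : ℝ)))) := by
  subst hH
  have huu : u * uᴴ = 1 := Matrix.mem_unitaryGroup_iff.1 hu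
  have hudet : u.det ≠ 0 := (Matrix.isUnit_det_of_right_inverse huu).ne_zero
  set W := Wmat A u with hWdef
  have hWW : W * Wᴴ = ∑ k, A k * (A k)ᴴ := by
    have := Tcp_eq A u 1
    simp only [Pi.one_apply, Matrix.diagonal_one', Matrix.diagonal_one, Matrix.mul_one, huu] at this
    rw [← this]; simp [Tcp]
  have hWu : IsUnit (W * Wᴴ).det := by
    rw [hWW]; exact (Matrix.isUnit_iff_isUnit_det _).1 hA.isUnit
  obtain ⟨σ, X, hdet, hWX, hσ, hlev⟩ := exists_adapted W hWu (fun c => (c.2 : ℕ))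
  set B := W.submatrix id σ with hB
  -- dimensions
  have hd1 : ∀ i, Module.finrank ℂ (ASpan A (colSpan u (i + 1)))
      = (Finset.univ.filter fun r => (((σ r).2 : Fin n) : ℕ) < i + 1).card := by
    intro i
    rw [ASpan_colSpan, span_adapted W X (fun c => (c.2 : ℕ)) σ hWX hlev,
      finrank_span_cols _ hdet]
  have hd2 : ∀ i, Module.finrank ℂ (colSpan u (i + 1))
      = (Finset.univ.filter fun r : Fin n => (r : ℕ) < i + 1).card := by
    intro i
    exact finrank_span_cols u hudet _
  simp_rw [hd1, hd2, mul_sub]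
  rw [Finset.sum_sub_distrib, abel eig (fun r => (σ r).2), abel eig (fun r => r)]
  set l : Fin m × Fin n → ℝ := fun c => eig c.2 with hl
  set μ : Fin n → ℝ := fun r => eig (σ r).2 with hμ
  have hXl : ∀ r c, X r c ≠ 0 → l c ≤ μ r := fun r c h => heig (hlev r c h)
  let q : ℝ → ℝ := fun t => (Ymat X μ l t * (Ymat X μ l t)ᴴ).det.re
  have hY := Ymat_tendsto X μ l hXl
  have hcont : Continuous fun Y : Matrix (Fin n) (Fin m × Fin n) ℂ => (Y * Yᴴ).det.re :=
    Complex.continuous_re.comp (Continuous.matrix_det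
      (Continuous.matrix_mul continuous_id (Continuous.matrix_conjTranspose continuous_id)))
  have hq : Tendsto q atTop (𝓝 (Ylim X μ l * (Ylim X μ l)ᴴ).det.re) :=
    (hcont.tendsto _).comp hY
  have hqpos : 0 < (Ylim X μ l * (Ylim X μ l)ᴴ).det.re :=
    (Complex.lt_def.1 (Ylim_posDef X μ l σ (fun _ => rfl) hσ).det_pos).1
  have hlogq := hq.log hqpos.ne'
  have hev : ∀ᶠ t in atTop, 0 < q t := hq.eventually (lt_mem_nhds hqpos)
  have hBpos : 0 < Complex.normSq B.det := Complex.normSq_pos.2 hdet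
  let K : ℝ := Real.log (Complex.normSq B.det) - fdet A 1
  have hlim : Tendsto (fun t : ℝ => (∑ r, μ r - ∑ r, eig r) + (Real.log (q t) + K) / t) atTop
      (𝓝 ((∑ r, μ r - ∑ r, eig r) + 0)) :=
    ((hlogq.add_const K).div_atTop tendsto_id).const_add _
  rw [add_zero] at hlim
  refine hlim.congr' ?_
  filter_upwards [hev, eventually_gt_atTop 0] with t ht ht0
  have hXdet : Real.log (u * diagonal (fun i => ((Real.exp (t * eig i) : ℝ) : ℂ)) * uᴴ).det.re
      = t * ∑ r, eig r := by
    have h1 : u.det * uᴴ.det = 1 := by rw [← Matrix.det_mul, huu, Matrix.det_one]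
    rw [Matrix.det_mul, Matrix.det_mul, mul_right_comm, h1, one_mul, Matrix.det_diagonal,
      ← Complex.ofReal_prod, Complex.ofReal_re, ← Real.exp_sum, Real.log_exp, Finset.mul_sum]
  have hTdet : Real.log (Tcp A (u * diagonal (fun i => ((Real.exp (t * eig i) : ℝ) : ℂ)) * uᴴ)).det.re
      = Real.log (Complex.normSq B.det) + t * ∑ r, μ r + Real.log (q t) := by
    have h2 := det_factor B X μ l t
    rw [← hWX] at h2
    rw [Tcp_eq, h2, Complex.re_ofReal_mul, Real.log_mul (by positivity) ht.ne',
      Real.log_mul hBpos.ne' (by positivity), Real.log_exp]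
  rw [exp_H u hu]
  have hf : fdet A (u * diagonal (fun i => ((Real.exp (t * eig i) : ℝ) : ℂ)) * uᴴ) =
      Real.log (Complex.normSq B.det) + t * ∑ r, μ r + Real.log (q t) - t * ∑ r, eig r := by
    rw [fdet, hXdet, hTdet]
  rw [hf]
  simp only [K]
  field_simp
  ring
end
end

section
/- Let 𝒜 = (A_1,…,A_m) be an m-tuple of n×n complex matrices such that Σ_{k=1}^m A_k A_kᴴ is positive definite, let f(X) := log det(Σ_{k=1}^m A_k X A_kᴴ) − log det X on positive definite Hermitian X, and for Hermitian H let f^∞(H) := lim_{t→∞} (f(e^{tH}) − f(I))/t. Then the infimum of f^∞(H) over all Hermitian n×n matrices H whose spectral norm (largest absolute value of an eigenvalue) is at most 1 equals 2 · min over all complex linear subspaces U ≤ ℂ^n of (dim 𝒜U − dim U). -/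
noncomputable section
open scoped Classical
open Matrix Filter
open scoped ComplexOrder Topology

lemma exp_form {n : ℕ} (V : Matrix (Fin n) (Fin n) ℂ) (hV : V * Vᴴ = 1) (l : Fin n → ℝ) (t : ℝ) :
    NormedSpace.exp (t • (V * diagonal (fun i => (l i : ℂ)) * Vᴴ))
      = V * diagonal (fun i => ((Real.exp (t * l i) : ℝ) : ℂ)) * Vᴴ := by
  have hinv : V⁻¹ = Vᴴ := Matrix.inv_eq_right_inv hV
  have hu : IsUnit V := (Matrix.isUnit_iff_isUnit_det _).2 (Matrix.isUnit_det_of_right_inverse hV)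
  rw [← hinv]
  have : t • (V * diagonal (fun i => (l i : ℂ)) * V⁻¹)
      = V * diagonal (fun i => ((t * l i : ℝ) : ℂ)) * V⁻¹ := by
    rw [← smul_mul_assoc, ← mul_smul_comm, ← diagonal_smul]
    congr 3
    ext i; simp
  rw [this, Matrix.exp_conj _ _ hu, Matrix.exp_diagonal]
  congr 3
  ext i
  simp [Pi.coe_exp, Complex.exp_eq_exp_ℂ]

/-- The vectors `A_k v_j`. -/
def bvec {m n : ℕ} (A : Fin m → Matrix (Fin n) (Fin n) ℂ) (V : Matrix (Fin n) (Fin n) ℂ)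
    (p : Fin m × Fin n) : Fin n → ℂ := A p.1 *ᵥ (fun i => V i p.2)

lemma Tcp_form {m n : ℕ} (A : Fin m → Matrix (Fin n) (Fin n) ℂ) (V : Matrix (Fin n) (Fin n) ℂ)
    (d : Fin n → ℂ) :
    Tcp A (V * diagonal d * Vᴴ)
      = ∑ p : Fin m × Fin n, d p.2 • vecMulVec (bvec A V p) (star (bvec A V p)) := by
  rw [Fintype.sum_prod_type]
  unfold Tcp
  refine Finset.sum_congr rfl fun k _ => ?_
  have : A k * (V * diagonal d * Vᴴ) * (A k)ᴴ = (A k * V) * diagonal d * (A k * V)ᴴ := by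
    simp [Matrix.conjTranspose_mul, Matrix.mul_assoc]
  rw [this]
  ext i j
  simp_rw [Matrix.mul_apply (M := A k * V * diagonal d), Matrix.sum_apply, Matrix.mul_diagonal]
  refine Finset.sum_congr rfl fun x _ => ?_
  simp only [Matrix.smul_apply, vecMulVec_apply, bvec, smul_eq_mul,
    conjTranspose_apply, Pi.star_apply, Matrix.mul_apply, mulVec, dotProduct]
  ring

lemma det_one_add {n : ℕ} (K : Matrix (Fin n) (Fin n) ℂ) (hK : K.PosSemidef) :
    1 ≤ (1 + K).det := by
  set W : Matrix (Fin n) (Fin n) ℂ := (hK.isHermitian.eigenvectorUnitary).1 with hW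
  have hWW : W * star W = 1 := Unitary.coe_mul_star_self _
  have hs := hK.isHermitian.spectral_theorem
  rw [Unitary.conjStarAlgAut_apply] at hs
  have h1 : 1 + K = W * (1 + diagonal (fun i => (hK.isHermitian.eigenvalues i : ℂ))) * star W := by
    rw [mul_add, add_mul, mul_one, hWW]
    congr 1
  have hd : W.det * (star W).det = 1 := by rw [← det_mul, hWW, det_one]
  have h2 : (1 + K).det = ((∏ i, (1 + hK.isHermitian.eigenvalues i) : ℝ) : ℂ) := by
    rw [h1, det_mul, det_mul, mul_right_comm, hd, one_mul, ← diagonal_one, diagonal_add,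
      det_diagonal]
    push_cast
    rfl
  rw [h2]
  have : (1:ℝ) ≤ ∏ i, (1 + hK.isHermitian.eigenvalues i) := by
    refine Finset.one_le_prod fun i _ => ?_
    have := hK.eigenvalues_nonneg i
    linarith
  exact_mod_cast this

lemma det_lower {n : ℕ} (G N : Matrix (Fin n) (Fin n) ℂ) (hN : N.PosSemidef) (hG : G.det ≠ 0) :
    ‖G.det‖ ^ 2 ≤ (G * Gᴴ + N).det.re := by
  have hu : IsUnit G.det := isUnit_iff_ne_zero.2 hG
  have h1 : G * G⁻¹ = 1 := Matrix.mul_nonsing_inv _ hu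
  have h2 : (G⁻¹)ᴴ * Gᴴ = 1 := by rw [← conjTranspose_mul, h1, conjTranspose_one]
  have hK : (G⁻¹ * N * (G⁻¹)ᴴ).PosSemidef := hN.mul_mul_conjTranspose_same _
  have h3 : G * Gᴴ + N = G * (1 + G⁻¹ * N * (G⁻¹)ᴴ) * Gᴴ := by
    have : G * (G⁻¹ * N * (G⁻¹)ᴴ) * Gᴴ = (G * G⁻¹) * N * ((G⁻¹)ᴴ * Gᴴ) := by
      simp only [Matrix.mul_assoc]
    rw [mul_add, add_mul, mul_one, this, h1, h2, one_mul, mul_one]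
  have h4 := det_one_add _ hK
  have h5 : (G * Gᴴ + N).det = ((‖G.det‖ ^ 2 : ℝ) : ℂ) * (1 + G⁻¹ * N * (G⁻¹)ᴴ).det := by
    rw [h3, det_mul, det_mul, det_conjTranspose, mul_right_comm]
    congr 1
    rw [Complex.star_def, Complex.mul_conj, Complex.normSq_eq_norm_sq]
  rw [h5, Complex.re_ofReal_mul]
  have h6 : (1:ℝ) ≤ (1 + G⁻¹ * N * (G⁻¹)ᴴ).det.re := (Complex.le_def.1 h4).1
  nlinarith [sq_nonneg ‖G.det‖]

lemma greedy {m n : ℕ} (A : Fin m → Matrix (Fin n) (Fin n) ℂ) (V : Matrix (Fin n) (Fin n) ℂ)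
    (hV : V * Vᴴ = 1) (l : Fin n → ℝ) (hl : ∀ i, l i ≤ 1) (D : ℝ)
    (hD : ∀ U : Submodule ℂ (Fin n → ℂ),
      D ≤ (Module.finrank ℂ (ASpan A U) : ℝ) - (Module.finrank ℂ U : ℝ)) (J : Finset (Fin n)) :
    ∃ S : Finset (Fin m × Fin n), (∀ s ∈ S, s.2 ∈ J) ∧ LinearIndepOn ℂ (bvec A V) (S : Set _) ∧
      (∀ k, ∀ j ∈ J, bvec A V (k, j) ∈ Submodule.span ℂ (bvec A V '' (S : Set _))) ∧
      ∀ a : ℝ, a ≤ 1 → (∀ j ∈ J, a ≤ l j) →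
        ∑ j ∈ J, (l j - a) + D * (1 - a) ≤ ∑ s ∈ S, (l s.2 - a) := by
  have hli : LinearIndependent ℂ (fun j : Fin n => (fun i => V i j)) :=
    Matrix.linearIndependent_cols_of_isUnit
      ((Matrix.isUnit_iff_isUnit_det _).2 (Matrix.isUnit_det_of_right_inverse hV))
  induction J using Finset.induction_on_min_value l with
  | empty =>
    refine ⟨∅, by simp, by simp, by simp, fun a ha _ => ?_⟩
    have h0 := hD ⊥
    have : ASpan A ⊥ = ⊥ := by simp [ASpan]
    rw [this] at h0
    simp at h0
    simp
    nlinarith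
  | insert x J hx hmin ih =>
    obtain ⟨S, hS1, hS2, hS3, hS4⟩ := ih
    have hsub : (S : Set (Fin m × Fin n)) ⊆ {s | s.2 ∈ insert x J} := fun s hs =>
      Finset.mem_insert_of_mem (hS1 s hs)
    obtain ⟨T, hT1, hT2, hT3, hT4⟩ := exists_linearIndepOn_extension hS2 hsub
    obtain ⟨T, rfl⟩ : ∃ T' : Finset (Fin m × Fin n), T = T' := ⟨T.toFinset, by simp⟩
    have hST : S ⊆ T := by exact_mod_cast hT2
    have hspan : ∀ k, ∀ j ∈ insert x J,
        bvec A V (k, j) ∈ Submodule.span ℂ (bvec A V '' (T : Set _)) := fun k j hj =>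
      hT3 ⟨(k, j), hj, rfl⟩
    refine ⟨T, fun s hs => hT1 hs, hT4, hspan, fun a ha haJ => ?_⟩
    -- elements of T \ S have weight l x
    have hnew : ∀ s ∈ T, s ∉ S → s.2 = x := by
      intro s hs hsS
      by_contra hne
      have hsJ : s.2 ∈ J := Finset.mem_of_mem_insert_of_ne (hT1 hs) hne
      have := hS3 s.1 s.2 hsJ
      have hind : LinearIndepOn ℂ (bvec A V) (insert s (S : Set (Fin m × Fin n))) :=
        hT4.mono (Set.insert_subset (Finset.mem_coe.2 hs) hT2)
      exact hind.notMem_span_of_insert (fun h => hsS (Finset.mem_coe.1 h)) this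
    have hcard : ((insert x J).card : ℝ) + D ≤ T.card := by
      have h1 := hD (Submodule.span ℂ ((fun j : Fin n => (fun i => V i j)) '' (insert x J : Finset _)))
      have h2 : Module.finrank ℂ (Submodule.span ℂ
          ((fun j : Fin n => (fun i => V i j)) '' (insert x J : Finset _))) = (insert x J).card := by
        have := finrank_span_set_eq_card
          (s := (fun j : Fin n => (fun i => V i j)) '' (insert x J : Finset _)) (R := ℂ)
          (hli.linearIndepOn _).id_image
        rw [this]
        rw [Set.toFinset_image, Finset.card_image_of_injective _ hli.injective]
        simp
      have h3 : ASpan A (Submodule.span ℂ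
          ((fun j : Fin n => (fun i => V i j)) '' (insert x J : Finset _)))
          ≤ Submodule.span ℂ (bvec A V '' (T : Set _)) := by
        refine iSup_le fun k => ?_
        rw [Submodule.map_span, Submodule.span_le]
        rintro _ ⟨_, ⟨j, hj, rfl⟩, rfl⟩
        exact hspan k j hj
      have h4 := Submodule.finrank_mono h3
      have h5 : Module.finrank ℂ (Submodule.span ℂ (bvec A V '' (T : Set _))) ≤ T.card := by
        rw [← Finset.coe_image]
        exact (finrank_span_finset_le_card _).trans Finset.card_image_le
      rw [h2] at h1
      have h6 : (Module.finrank ℂ (ASpan A (Submodule.span ℂ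
          ((fun j : Fin n => (fun i => V i j)) '' (insert x J : Finset _)))) : ℝ) ≤ T.card := by
        exact_mod_cast h4.trans h5
      linarith
    have hx1 := hS4 (l x) (hl x) hmin
    have hax : a ≤ l x := haJ x (Finset.mem_insert_self _ _)
    have e1 : ∑ s ∈ T, (l s.2 - a) = ∑ s ∈ S, (l s.2 - l x) + T.card * (l x - a) := by
      have : ∑ s ∈ T, (l s.2 - l x) = ∑ s ∈ S, (l s.2 - l x) :=
        (Finset.sum_subset hST fun s hs hsS => by rw [hnew s hs hsS, sub_self]).symm
      rw [← this, ← nsmul_eq_mul, ← Finset.sum_const, ← Finset.sum_add_distrib]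
      exact Finset.sum_congr rfl fun _ _ => by ring
    have e2 : ∑ j ∈ insert x J, (l j - a) = ∑ j ∈ J, (l j - l x) + (insert x J).card * (l x - a) := by
      have : ∑ j ∈ insert x J, (l j - l x) = ∑ j ∈ J, (l j - l x) := by
        rw [Finset.sum_insert hx]; simp
      rw [← this, ← nsmul_eq_mul, ← Finset.sum_const, ← Finset.sum_add_distrib]
      exact Finset.sum_congr rfl fun _ _ => by ring
    rw [e1, e2]
    nlinarith [mul_le_mul_of_nonneg_right hcard (sub_nonneg.2 hax)]

lemma bvec_span {m n : ℕ} (A : Fin m → Matrix (Fin n) (Fin n) ℂ)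
    (hA : (∑ k, A k * (A k)ᴴ).PosDef) (V : Matrix (Fin n) (Fin n) ℂ)
    (hV : V * Vᴴ = 1) : Submodule.span ℂ (Set.range (bvec A V)) = ⊤ := by
  rw [eq_top_iff]
  intro y _
  have hu : IsUnit (∑ k, A k * (A k)ᴴ).det := hA.det_pos.ne'.isUnit
  have hy : y = (∑ k, A k * (A k)ᴴ) *ᵥ ((∑ k, A k * (A k)ᴴ)⁻¹ *ᵥ y) := by
    rw [mulVec_mulVec, Matrix.mul_nonsing_inv _ hu, one_mulVec]
  rw [hy, Matrix.sum_mulVec]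
  refine Submodule.sum_mem _ fun k _ => ?_
  rw [← mulVec_mulVec]
  generalize (A k)ᴴ *ᵥ ((∑ k, A k * (A k)ᴴ)⁻¹ *ᵥ y) = w
  have : A k *ᵥ w = ∑ j, (Vᴴ *ᵥ w) j • bvec A V (k, j) := by
    have h1 : A k *ᵥ w = (A k * V) *ᵥ (Vᴴ *ᵥ w) := by
      rw [mulVec_mulVec, Matrix.mul_assoc, hV, Matrix.mul_one]
    rw [h1]
    ext i
    rw [Finset.sum_apply, mulVec, dotProduct]
    refine Finset.sum_congr rfl fun j _ => ?_
    simp only [Pi.smul_apply, smul_eq_mul, bvec, mulVec, dotProduct, Matrix.mul_apply]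
    ring
  rw [this]
  exact Submodule.sum_mem _ fun j _ => Submodule.smul_mem _ _ (Submodule.subset_span ⟨_, rfl⟩)

lemma lower {m n : ℕ} (A : Fin m → Matrix (Fin n) (Fin n) ℂ)
    (hA : (∑ k, A k * (A k)ᴴ).PosDef) (V : Matrix (Fin n) (Fin n) ℂ)
    (hV : V * Vᴴ = 1) (l : Fin n → ℝ) (hl : ∀ i, |l i| ≤ 1) (D : ℝ)
    (hD : ∀ U : Submodule ℂ (Fin n → ℂ),
      D ≤ (Module.finrank ℂ (ASpan A U) : ℝ) - (Module.finrank ℂ U : ℝ)) :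
    ∃ c : ℝ, 0 < c ∧ ∃ w : ℝ, ∑ i, l i + 2 * D ≤ w ∧ ∀ t : ℝ, c * Real.exp (t * w) ≤
      (Tcp A (V * diagonal (fun i => ((Real.exp (t * l i) : ℝ) : ℂ)) * Vᴴ)).det.re := by
  obtain ⟨S, -, hli, hsp, hw⟩ :=
    greedy A V hV l (fun i => (abs_le.1 (hl i)).2) D hD Finset.univ
  have hw := hw (-1) (by norm_num) (fun j _ => (abs_le.1 (hl j)).1)
  have htop : Submodule.span ℂ (bvec A V '' (S : Set _)) = ⊤ := by
    rw [eq_top_iff, ← bvec_span A hA V hV, Submodule.span_le]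
    rintro _ ⟨⟨k, j⟩, rfl⟩
    exact hsp k j (Finset.mem_univ _)
  have hli' : LinearIndependent ℂ (fun s : S => bvec A V s) := hli
  have hcard : Fintype.card S = n := by
    have h1 := finrank_span_eq_card hli'
    have h2 : Set.range (fun s : S => bvec A V s) = bvec A V '' (S : Set _) := by
      ext; simp
    rw [h2, htop] at h1
    simpa using h1.symm
  have hcard' : S.card = n := by simpa using hcard
  let e : Fin n ≃ S := (Fintype.equivFinOfCardEq hcard).symm
  let B : Matrix (Fin n) (Fin n) ℂ := Matrix.of fun i s => bvec A V (e s) i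
  have hB : B.det ≠ 0 := by
    have h1 : LinearIndependent ℂ B.col := hli'.comp e e.injective
    have := Matrix.linearIndependent_cols_iff_isUnit.1 h1
    exact ((Matrix.isUnit_iff_isUnit_det _).1 this).ne_zero
  refine ⟨‖B.det‖ ^ 2, by positivity, ∑ s ∈ S, l s.2, ?_, fun t => ?_⟩
  · simp only [Finset.sum_sub_distrib, Finset.sum_const, hcard', Finset.card_univ,
      Fintype.card_fin] at hw
    linarith
  · set G := B * diagonal (fun s => ((Real.exp (t * l (e s).1.2 / 2) : ℝ) : ℂ)) with hG
    have hdet : ‖G.det‖ ^ 2 = ‖B.det‖ ^ 2 * Real.exp (t * ∑ s ∈ S, l s.2) := by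
      rw [hG, det_mul, det_diagonal, norm_mul, mul_pow]
      congr 1
      rw [← Complex.ofReal_prod, Complex.norm_real, ← Real.exp_sum, Real.norm_eq_abs, Real.abs_exp,
        ← Real.exp_nat_mul]
      congr 1
      rw [← Finset.sum_coe_sort S, ← e.sum_comp, Finset.mul_sum, Finset.mul_sum]
      refine Finset.sum_congr rfl fun x _ => ?_
      push_cast; ring
    have hGd : G.det ≠ 0 := by
      intro h
      rw [h] at hdet
      have : 0 < ‖B.det‖ ^ 2 * Real.exp (t * ∑ s ∈ S, l s.2) := by positivity
      rw [← hdet] at this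
      simp at this
    set d : Fin n → ℂ := fun i => ((Real.exp (t * l i) : ℝ) : ℂ) with hd
    have hN : (∑ p ∈ Sᶜ, d p.2 • vecMulVec (bvec A V p) (star (bvec A V p))).PosSemidef := by
      refine Matrix.posSemidef_sum _ fun p _ => ?_
      refine (posSemidef_vecMulVec_self_star _).smul ?_
      exact Complex.zero_le_real.2 (Real.exp_pos _).le
    have hGG : G * Gᴴ = ∑ p ∈ S, d p.2 • vecMulVec (bvec A V p) (star (bvec A V p)) := by
      rw [← Finset.sum_coe_sort S, ← e.sum_comp]
      ext i j
      rw [Matrix.mul_apply, Matrix.sum_apply]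
      refine Finset.sum_congr rfl fun x _ => ?_
      have h2 : d (e x).1.2 = ((Real.exp (t * l (e x).1.2 / 2) : ℝ) : ℂ) *
          ((Real.exp (t * l (e x).1.2 / 2) : ℝ) : ℂ) := by
        rw [hd, ← Complex.ofReal_mul, ← Real.exp_add, add_halves]
      rw [Matrix.smul_apply, h2, conjTranspose_apply, hG, Matrix.mul_diagonal, Matrix.mul_diagonal,
        vecMulVec_apply, star_mul', Complex.star_def, Complex.conj_ofReal]
      simp only [B, Matrix.of_apply, Pi.star_apply, smul_eq_mul, Complex.star_def]
      ring
    have := det_lower G _ hN hGd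
    rw [hGG, Finset.sum_add_sum_compl, hdet] at this
    rw [Tcp_form]
    exact this

lemma det_VdV {n : ℕ} (V : Matrix (Fin n) (Fin n) ℂ) (hV : V * Vᴴ = 1) (l : Fin n → ℝ) (t : ℝ) :
    Real.log (V * diagonal (fun i => ((Real.exp (t * l i) : ℝ) : ℂ)) * Vᴴ).det.re
      = t * ∑ i, l i := by
  have hd : V.det * (Vᴴ).det = 1 := by rw [← det_mul, hV, det_one]
  rw [det_mul, det_mul, mul_right_comm, hd, one_mul, det_diagonal, ← Complex.ofReal_prod,
    Complex.ofReal_re, ← Real.exp_sum, Real.log_exp, Finset.mul_sum]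

lemma limit_lower {m n : ℕ} (A : Fin m → Matrix (Fin n) (Fin n) ℂ)
    (hA : (∑ k, A k * (A k)ᴴ).PosDef) (D : ℝ)
    (hD : ∀ U : Submodule ℂ (Fin n → ℂ),
      D ≤ (Module.finrank ℂ (ASpan A U) : ℝ) - (Module.finrank ℂ U : ℝ))
    (H : Matrix (Fin n) (Fin n) ℂ) (hH : H.IsHermitian) (he : ∀ i, |hH.eigenvalues i| ≤ 1)
    (r : ℝ) (hr : Tendsto (fun t : ℝ => (fdet A (NormedSpace.exp (t • H)) - fdet A 1) / t)
            atTop (𝓝 r)) : 2 * D ≤ r := by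
  set V : Matrix (Fin n) (Fin n) ℂ := (hH.eigenvectorUnitary).1 with hVd
  have hV : V * Vᴴ = 1 := Unitary.coe_mul_star_self _
  have hs : H = V * diagonal (fun i => (hH.eigenvalues i : ℂ)) * Vᴴ := by
    have hs := hH.spectral_theorem
    rw [Unitary.conjStarAlgAut_apply] at hs
    exact hs
  obtain ⟨c, hc, w, hw, hlow⟩ := lower A hA V hV hH.eigenvalues he D hD
  have hlim : Tendsto (fun t : ℝ => (Real.log c - fdet A 1) / t + 2 * D) atTop (𝓝 (0 + 2 * D)) :=
    (tendsto_const_nhds.div_atTop tendsto_id).add tendsto_const_nhds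
  rw [zero_add] at hlim
  refine le_of_tendsto_of_tendsto hlim hr ?_
  filter_upwards [eventually_gt_atTop 0] with t ht
  have h1 : fdet A (NormedSpace.exp (t • H)) ≥ Real.log c + t * (2 * D) := by
    rw [congrArg (fun M => t • M) hs, exp_form V hV, fdet, det_VdV V hV]
    have := Real.log_le_log (by positivity) (hlow t)
    rw [Real.log_mul hc.ne' (Real.exp_pos _).ne', Real.log_exp] at this
    nlinarith
  rw [div_add' _ _ _ ht.ne']
  gcongr
  linarith

lemma poly_limit (q : Polynomial ℝ) (hq : ∀ t : ℝ, 0 < q.eval (Real.exp (2 * t))) :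
    Tendsto (fun t : ℝ => Real.log (q.eval (Real.exp (2 * t))) / t) atTop
      (𝓝 (2 * (q.natDegree : ℝ))) := by
  have hq0 : q ≠ 0 := by
    rintro rfl
    simpa using hq 0
  have hL : q.leadingCoeff ≠ 0 := Polynomial.leadingCoeff_ne_zero.2 hq0
  have h1 : Tendsto (fun x : ℝ => q.eval x / (Polynomial.X ^ q.natDegree : Polynomial ℝ).eval x)
      atTop (𝓝 (q.leadingCoeff / (Polynomial.X ^ q.natDegree : Polynomial ℝ).leadingCoeff)) :=
    Polynomial.div_tendsto_atTop_leadingCoeff_div_of_degree_eq _ _ (by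
      rw [Polynomial.degree_X_pow, Polynomial.degree_eq_natDegree hq0])
  simp only [Polynomial.eval_pow, Polynomial.eval_X, Polynomial.leadingCoeff_X_pow, div_one] at h1
  have h2 : Tendsto (fun t : ℝ => Real.exp (2 * t)) atTop atTop :=
    Real.tendsto_exp_atTop.comp (tendsto_id.const_mul_atTop (by norm_num))
  have h3 := (h1.comp h2).log hL
  have h4 := (h3.div_atTop tendsto_id).add_const (2 * (q.natDegree : ℝ))
  rw [zero_add] at h4
  refine h4.congr' ?_
  filter_upwards [eventually_gt_atTop 0] with t ht
  simp only [Function.comp_apply, id]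
  rw [Real.log_div (hq t).ne' (by positivity), Real.log_pow, Real.log_exp]
  field_simp
  ring

lemma re_poly (p : Polynomial ℂ) : ∃ q : Polynomial ℝ, q.natDegree ≤ p.natDegree ∧
    ∀ s : ℝ, q.eval s = (p.eval (s : ℂ)).re := by
  refine ⟨∑ i ∈ Finset.range (p.natDegree + 1),
    Polynomial.C (p.coeff i).re * Polynomial.X ^ i, ?_, fun s => ?_⟩
  · refine Polynomial.natDegree_sum_le_of_forall_le _ _ fun i hi => ?_
    exact (Polynomial.natDegree_C_mul_X_pow_le _ _).trans (Nat.lt_succ_iff.1 (Finset.mem_range.1 hi))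
  · rw [Polynomial.eval_eq_sum_range (p := p), Polynomial.eval_finsetSum, Complex.re_sum]
    refine Finset.sum_congr rfl fun i _ => ?_
    rw [← Complex.ofReal_pow, Complex.re_mul_ofReal]
    simp

lemma det_poly {n : ℕ} (P Q : Matrix (Fin n) (Fin n) ℂ) (hP : P.IsHermitian) :
    ∃ q : Polynomial ℝ, q.natDegree ≤ P.rank ∧
      ∀ s : ℝ, q.eval s = ((s : ℂ) • P + Q).det.re := by
  set W : Matrix (Fin n) (Fin n) ℂ := (hP.eigenvectorUnitary).1 with hW
  have hWW : star W * W = 1 := Unitary.coe_star_mul_self _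
  have hWW' : W * star W = 1 := Unitary.coe_mul_star_self _
  have hs : P = W * diagonal (fun i => (hP.eigenvalues i : ℂ)) * star W := by
    have hs := hP.spectral_theorem
    rw [Unitary.conjStarAlgAut_apply] at hs
    exact hs
  let M : Matrix (Fin n) (Fin n) (Polynomial ℂ) := Matrix.of fun i j =>
    Polynomial.X * Polynomial.C (diagonal (fun i => (hP.eigenvalues i : ℂ)) i j)
      + Polynomial.C ((star W * Q * W) i j)
  obtain ⟨q, hq1, hq2⟩ := re_poly M.det
  refine ⟨q, hq1.trans ?_, fun s => ?_⟩
  · rw [hP.rank_eq_card_non_zero_eigs, Fintype.card_subtype, Finset.card_filter, det_apply]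
    refine Polynomial.natDegree_sum_le_of_forall_le _ _ fun σ _ => ?_
    refine (Polynomial.natDegree_smul_le _ _).trans ((Polynomial.natDegree_prod_le _ _).trans ?_)
    rw [← Equiv.sum_comp σ (fun i => if hP.eigenvalues i ≠ 0 then 1 else 0)]
    refine Finset.sum_le_sum fun i _ => ?_
    simp only [M, Matrix.of_apply]
    by_cases h : hP.eigenvalues (σ i) = 0
    · have : diagonal (fun i => (hP.eigenvalues i : ℂ)) (σ i) i = 0 := by
        rw [diagonal_apply]; simp [h]
      rw [this]; simp
    · rw [if_pos h]
      compute_degree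
  · rw [hq2]
    congr 1
    have h1 : M.det.eval (s : ℂ) = ((s : ℂ) • diagonal (fun i => (hP.eigenvalues i : ℂ))
        + star W * Q * W).det := by
      rw [← Polynomial.coe_evalRingHom, RingHom.map_det]
      congr 1
      ext i j
      simp only [M, RingHom.mapMatrix_apply, Matrix.map_apply, Matrix.of_apply,
        Polynomial.coe_evalRingHom, Polynomial.eval_add, Polynomial.eval_mul, Polynomial.eval_X,
        Polynomial.eval_C, Matrix.add_apply, Matrix.smul_apply, smul_eq_mul]
    have h2 : (s : ℂ) • diagonal (fun i => (hP.eigenvalues i : ℂ)) + star W * Q * W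
        = star W * ((s : ℂ) • P + Q) * W := by
      have : star W * P * W = diagonal (fun i => (hP.eigenvalues i : ℂ)) := by
        conv_lhs => rw [hs]
        calc _ = (star W * W) * diagonal (fun i => (hP.eigenvalues i : ℂ)) * (star W * W) := by
              simp only [Matrix.mul_assoc]
          _ = _ := by rw [hWW, one_mul, mul_one]
      rw [mul_add, add_mul, mul_smul_comm, smul_mul_assoc, this]
    have hd : W.det * (star W).det = 1 := by rw [← det_mul, hWW', det_one]
    rw [h1, h2, det_mul, det_mul, mul_comm, ← mul_assoc, hd, one_mul]

lemma exists_V {n : ℕ} (U : Submodule ℂ (Fin n → ℂ)) :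
    ∃ V : Matrix (Fin n) (Fin n) ℂ, V * Vᴴ = 1 ∧
      ∀ j : Fin n, (j : ℕ) < Module.finrank ℂ U → (fun i => V i j) ∈ U := by
  let L := WithLp.linearEquiv 2 ℂ (Fin n → ℂ)
  let U' : Submodule ℂ (EuclideanSpace ℂ (Fin n)) := U.map L.symm.toLinearMap
  have hfr : Module.finrank ℂ U' = Module.finrank ℂ U := LinearEquiv.finrank_map_eq L.symm U
  let bU := stdOrthonormalBasis ℂ U'
  let v : Fin n → EuclideanSpace ℂ (Fin n) := fun i =>
    if h : (i : ℕ) < Module.finrank ℂ U' then (bU ⟨i, h⟩ : EuclideanSpace ℂ (Fin n)) else 0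
  let s : Set (Fin n) := {i | (i : ℕ) < Module.finrank ℂ U'}
  have hv : Orthonormal ℂ (s.domRestrict v) := by
    have h1 : Orthonormal ℂ (fun i => (bU i : EuclideanSpace ℂ (Fin n))) :=
      bU.orthonormal.comp_linearIsometry U'.subtypeₗᵢ
    have h2 := h1.comp (fun i : s => (⟨i.1, i.2⟩ : Fin (Module.finrank ℂ U')))
      (fun a b h => by
        simp only [Fin.mk.injEq] at h
        exact Subtype.ext (Fin.ext h))
    convert h2 using 1
    ext i : 1
    have : ((i : Fin n) : ℕ) < Module.finrank ℂ U' := i.2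
    simp [v, this, Set.domRestrict_apply]
  obtain ⟨b, hb⟩ := hv.exists_orthonormalBasis_extension_of_card_eq (by simp)
  refine ⟨(EuclideanSpace.basisFun (Fin n) ℂ).toBasis.toMatrix b.toBasis, ?_, fun j hj => ?_⟩
  · exact (Unitary.mem_iff.1
      ((EuclideanSpace.basisFun (Fin n) ℂ).toMatrix_orthonormalBasis_mem_unitary b)).2
  · have hj' : (j : ℕ) < Module.finrank ℂ U' := by rw [hfr]; exact hj
    have h1 : b j ∈ U' := by
      rw [hb j hj']
      simp [v, hj']
    obtain ⟨x, hx, hxj⟩ := h1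
    have : (fun i => (EuclideanSpace.basisFun (Fin n) ℂ).toBasis.toMatrix b.toBasis i j) = x := by
      ext i
      simp only [Module.Basis.toMatrix_apply, OrthonormalBasis.coe_toBasis,
        OrthonormalBasis.coe_toBasis_repr_apply, EuclideanSpace.basisFun_repr]
      rw [← hxj]
      rfl
    rw [this]
    exact hx

lemma limit_upper {m n : ℕ} (A : Fin m → Matrix (Fin n) (Fin n) ℂ)
    (hA : (∑ k, A k * (A k)ᴴ).PosDef) (D : ℝ)
    (hD : ∀ U : Submodule ℂ (Fin n → ℂ),
      D ≤ (Module.finrank ℂ (ASpan A U) : ℝ) - (Module.finrank ℂ U : ℝ))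
    (U : Submodule ℂ (Fin n → ℂ)) :
    ∃ r : ℝ, (∃ (H : Matrix (Fin n) (Fin n) ℂ) (hH : H.IsHermitian),
        (∀ i, |hH.eigenvalues i| ≤ 1) ∧
          Tendsto (fun t : ℝ => (fdet A (NormedSpace.exp (t • H)) - fdet A 1) / t)
            atTop (𝓝 r)) ∧
      r ≤ 2 * ((Module.finrank ℂ (ASpan A U) : ℝ) - (Module.finrank ℂ U : ℝ)) := by
  obtain ⟨V, hV, hVU⟩ := exists_V U
  have hV' : Vᴴ * V = 1 := mul_eq_one_comm.1 hV
  set u := Module.finrank ℂ U with hu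
  have hun : u ≤ n := by simpa using Submodule.finrank_le U
  let l : Fin n → ℝ := fun i => if (i : ℕ) < u then 1 else -1
  have hl : ∀ i, |l i| ≤ 1 := fun i => by simp only [l]; split_ifs <;> simp
  have hsum : ∑ i, l i = 2 * u - n := by
    have : ∀ i, l i = 2 * (if (i : ℕ) < u then 1 else 0) - 1 := fun i => by
      simp only [l]; split_ifs <;> norm_num
    simp only [this]
    rw [Finset.sum_sub_distrib, ← Finset.mul_sum, Finset.sum_boole, Fin.card_filter_val_lt]
    simp [hun]
  obtain ⟨c, hc, w, -, hlow⟩ := lower A hA V hV l hl D hD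
  let F : Finset (Fin m × Fin n) := Finset.univ.filter (fun p => (p.2 : ℕ) < u)
  let P := ∑ p ∈ F, vecMulVec (bvec A V p) (star (bvec A V p))
  let Q := ∑ p ∈ Fᶜ, vecMulVec (bvec A V p) (star (bvec A V p))
  have hP : P.IsHermitian :=
    (Matrix.posSemidef_sum _ fun p _ => posSemidef_vecMulVec_self_star _).isHermitian
  have hrank : P.rank ≤ Module.finrank ℂ (ASpan A U) := by
    refine Submodule.finrank_mono ?_
    rintro _ ⟨x, rfl⟩
    rw [mulVecLin_apply, Matrix.sum_mulVec]
    refine Submodule.sum_mem _ fun p hp => ?_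
    rw [vecMulVec_mulVec, op_smul_eq_smul]
    refine Submodule.smul_mem _ _ ?_
    refine Submodule.mem_iSup_of_mem (p := fun k => U.map (A k).mulVecLin) p.1 ?_
    exact ⟨_, hVU p.2 (Finset.mem_filter.1 hp).2, rfl⟩
  obtain ⟨q, hq1, hq2⟩ := det_poly P Q hP
  have hT : ∀ t : ℝ, (Tcp A (V * diagonal (fun i => ((Real.exp (t * l i) : ℝ) : ℂ)) * Vᴴ)).det.re
      = Real.exp (-(n * t)) * q.eval (Real.exp (2 * t)) := by
    intro t
    have h1 : Tcp A (V * diagonal (fun i => ((Real.exp (t * l i) : ℝ) : ℂ)) * Vᴴ)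
        = ((Real.exp (-t) : ℝ) : ℂ) • (((Real.exp (2 * t) : ℝ) : ℂ) • P + Q) := by
      rw [Tcp_form, ← Finset.sum_add_sum_compl F, smul_add, smul_smul, Finset.smul_sum,
        Finset.smul_sum]
      congr 1
      · refine Finset.sum_congr rfl fun p hp => ?_
        have : l p.2 = 1 := if_pos (Finset.mem_filter.1 hp).2
        rw [this, ← Complex.ofReal_mul, ← Real.exp_add]
        congr 3; ring_nf
      · refine Finset.sum_congr rfl fun p hp => ?_
        have : l p.2 = -1 := if_neg (by simpa [F] using hp)
        rw [this]
        congr 3; ring_nf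
    rw [h1, det_smul, Fintype.card_fin, ← Complex.ofReal_pow, Complex.re_ofReal_mul, hq2,
      ← Real.exp_nat_mul]
    congr 2; ring
  have hqpos : ∀ t : ℝ, 0 < q.eval (Real.exp (2 * t)) := by
    intro t
    have h1 : 0 < c * Real.exp (t * w) := by positivity
    have h2 := h1.trans_le (hlow t)
    rw [hT] at h2
    exact pos_of_mul_pos_right h2 (Real.exp_pos _).le
  set H : Matrix (Fin n) (Fin n) ℂ := V * diagonal (fun i => (l i : ℂ)) * Vᴴ with hHdef
  have hH : H.IsHermitian := by
    rw [IsHermitian, hHdef, conjTranspose_mul, conjTranspose_mul, conjTranspose_conjTranspose,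
      diagonal_conjTranspose, Matrix.mul_assoc]
    congr 3
    ext i
    simp
  have hHH : H * H = 1 := by
    have : diagonal (fun i => (l i : ℂ)) * diagonal (fun i => (l i : ℂ)) = 1 := by
      rw [diagonal_mul_diagonal, ← diagonal_one]
      congr 1
      ext i
      simp only [l]; split_ifs <;> simp
    calc H * H = V * (diagonal (fun i => (l i : ℂ)) * (Vᴴ * V) * diagonal (fun i => (l i : ℂ))) * Vᴴ := by
          rw [hHdef]; simp only [Matrix.mul_assoc]
      _ = 1 := by rw [hV', mul_one, this, mul_one, hV]
  refine ⟨2 * q.natDegree - 2 * u, ⟨H, hH, fun i => ?_, ?_⟩, ?_⟩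
  · have h1 := hH.mulVec_eigenvectorBasis i
    have h2 : H *ᵥ (H *ᵥ ⇑(hH.eigenvectorBasis i)) = ⇑(hH.eigenvectorBasis i) := by
      rw [mulVec_mulVec, hHH, one_mulVec]
    rw [h1, mulVec_smul, h1, smul_smul] at h2
    have h3 : (hH.eigenvectorBasis i).ofLp ≠ 0 := by
      intro h
      have := hH.eigenvectorBasis.toBasis.ne_zero i
      apply this
      ext j
      simpa using congrFun h j
    have h4 : hH.eigenvalues i * hH.eigenvalues i = 1 := by
      have h5 : (hH.eigenvalues i * hH.eigenvalues i - 1) • (hH.eigenvectorBasis i).ofLp = 0 := by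
        rw [sub_smul, h2, one_smul, sub_self]
      rcases smul_eq_zero.1 h5 with h | h
      · linarith
      · exact absurd h h3
    rw [abs_le]
    constructor <;> nlinarith
  · have h1 := (poly_limit q hqpos).sub_const (2 * (u : ℝ))
    have h2 : Tendsto (fun t : ℝ => fdet A 1 / t) atTop (𝓝 0) :=
      tendsto_const_nhds.div_atTop tendsto_id
    have h3 := h1.sub h2
    rw [sub_zero] at h3
    refine h3.congr' ?_
    filter_upwards [eventually_gt_atTop 0] with t ht
    rw [hHdef, exp_form V hV]
    conv_rhs => rw [fdet, det_VdV V hV, hT, Real.log_mul (Real.exp_pos _).ne' (hqpos t).ne',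
      Real.log_exp, hsum]
    field_simp
    ring
  · have : (q.natDegree : ℝ) ≤ Module.finrank ℂ (ASpan A U) := by exact_mod_cast hq1.trans hrank
    linarith

/-- The infimum of the recession function `f^∞(H)` over Hermitian `H` of spectral norm at
most `1` equals `2 · min_U (dim 𝒜U - dim U)`. -/
theorem inf_recession_eq_two_min {m n : ℕ} (A : Fin m → Matrix (Fin n) (Fin n) ℂ)
    (hA : (∑ k, A k * (A k)ᴴ).PosDef) :
    sInf {r : ℝ | ∃ (H : Matrix (Fin n) (Fin n) ℂ) (hH : H.IsHermitian),
        (∀ i, |hH.eigenvalues i| ≤ 1) ∧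
          Tendsto (fun t : ℝ => (fdet A (NormedSpace.exp (t • H)) - fdet A 1) / t)
            atTop (𝓝 r)}
      = 2 * sInf {d : ℝ | ∃ U : Submodule ℂ (Fin n → ℂ),
          d = (Module.finrank ℂ (ASpan A U) : ℝ) - (Module.finrank ℂ U : ℝ)} := by
  set R := {r : ℝ | ∃ (H : Matrix (Fin n) (Fin n) ℂ) (hH : H.IsHermitian),
        (∀ i, |hH.eigenvalues i| ≤ 1) ∧
          Tendsto (fun t : ℝ => (fdet A (NormedSpace.exp (t • H)) - fdet A 1) / t)
            atTop (𝓝 r)} with hR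
  set E := {d : ℝ | ∃ U : Submodule ℂ (Fin n → ℂ),
          d = (Module.finrank ℂ (ASpan A U) : ℝ) - (Module.finrank ℂ U : ℝ)} with hE
  have hEb : BddBelow E := by
    refine ⟨-(n : ℝ), ?_⟩
    rintro _ ⟨U, rfl⟩
    have h1 : (Module.finrank ℂ U : ℝ) ≤ n := by
      exact_mod_cast (by simpa using Submodule.finrank_le U : Module.finrank ℂ U ≤ n)
    have h2 : (0 : ℝ) ≤ Module.finrank ℂ (ASpan A U) := Nat.cast_nonneg _
    linarith
  have hD : ∀ U : Submodule ℂ (Fin n → ℂ),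
      sInf E ≤ (Module.finrank ℂ (ASpan A U) : ℝ) - (Module.finrank ℂ U : ℝ) :=
    fun U => csInf_le hEb ⟨U, rfl⟩
  have hRl : ∀ r ∈ R, 2 * sInf E ≤ r := by
    rintro r ⟨H, hH, he, hr⟩
    exact limit_lower A hA _ hD H hH he r hr
  apply le_antisymm
  · have : sInf R / 2 ≤ sInf E := by
      refine le_csInf ⟨_, ⊥, rfl⟩ ?_
      rintro _ ⟨U, rfl⟩
      obtain ⟨r, hr, hle⟩ := limit_upper A hA _ hD U
      have := csInf_le ⟨_, hRl⟩ hr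
      linarith
    linarith
  · obtain ⟨r, hr, -⟩ := limit_upper A hA _ hD ⊥
    exact le_csInf ⟨r, hr⟩ hRl
end
end
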